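/- Let K be an infinite field, S = K[x_1,...,x_n], and fix an integer j. Let I ⊆ S and J ⊆ S be homogeneous ideals. Then for a general change of coordinates g ∈ GL_n(K), one has dim_K Tor_i^S(I, S/g(J))_j ≤ dim_K Tor_i^S(Gin_lex(I), S/Gin_oplex(J))_j for all i ≥ 0. -/

import Mathlib

open MvPolynomial TensorProduct CategoryTheory

noncomputable section

/-- The polynomial ring `S = K[x_1,...,x_n]`, standard graded. -/
abbrev PS (K : Type) [Field K] (n : ℕ) : Type := MvPolynomial (Fin n) K

variable (K : Type) [Field K] (n : ℕ)

/-- An ideal of `S` is homogeneous if it contains all homogeneous components of its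
elements. -/
def IsHomog (I : Ideal (PS K n)) : Prop :=
  ∀ f ∈ I, ∀ d : ℕ, MvPolynomial.homogeneousComponent d f ∈ I

/-- The change of coordinates of `S` induced by `g ∈ GL_n(K)`, determined by
`g(x_i) = ∑_j g_{ji} x_j`. -/
def coordChange (g : GL (Fin n) K) : PS K n →ₐ[K] PS K n :=
  MvPolynomial.aeval (fun i => ∑ j, ((g : Matrix (Fin n) (Fin n) K) j i) • MvPolynomial.X j)

/-- A property `P` holds for a general change of coordinates `g ∈ GL_n(K)` if there is a
nonempty Zariski open subset `U ⊆ GL_n(K)` on which it holds; equivalently (as `GL_n(K)` is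
an irreducible variety over the infinite field `K`) there is a nonzero polynomial `F` in the
matrix entries such that `P g` holds whenever `F` does not vanish at `g`. -/
def generally (P : GL (Fin n) K → Prop) : Prop :=
  ∃ F : MvPolynomial (Fin n × Fin n) K, F ≠ 0 ∧
    ∀ g : GL (Fin n) K,
      MvPolynomial.eval (fun p => (g : Matrix (Fin n) (Fin n) K) p.1 p.2) F ≠ 0 → P g

/-- The standard grading of `S = K[x_1,...,x_n]`, extended to `ℤ` (zero in negative
degrees). -/
def polyGrade (d : ℤ) : Submodule K (PS K n) :=
  if 0 ≤ d then homogeneousSubmodule (Fin n) K d.toNat else ⊥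

/-- The degree `d` component of the (internal) tensor-product grading on `A ⊗[K] B`. -/
def tensorGrade {A B : Type} [AddCommGroup A] [Module K A] [AddCommGroup B] [Module K B]
    (GA : ℤ → Submodule K A) (GB : ℤ → Submodule K B) (d : ℤ) :
    Submodule K (A ⊗[K] B) :=
  ⨆ p : ℤ, LinearMap.range (TensorProduct.map (GA p).subtype (GB (d - p)).subtype)

variable (N : Type) [AddCommGroup N] [Module K N] [Module (PS K n) N]
  [IsScalarTower K (PS K n) N]

/-- The tower of `K`-vector spaces `D_i = S^{⊗ i} ⊗_K N` appearing in the bar complex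
`M ⊗_K S^{⊗ i} ⊗_K N`, which computes `Tor^S_i(M, N)`. -/
def barD : ℕ → ModuleCat K
  | 0 => ModuleCat.of K N
  | (i + 1) => ModuleCat.of K (PS K n ⊗[K] (barD i))

/-- The internal `ℤ`-grading on `D_i = S^{⊗ i} ⊗_K N` induced by the standard grading of
`S` and a grading `GN` of `N`. -/
def barDGrade (GN : ℤ → Submodule K N) : (i : ℕ) → ℤ → Submodule K (barD K n N i)
  | 0 => GN
  | (i + 1) => tensorGrade K (polyGrade K n) (barDGrade GN i)

/-- Scalar multiplication `S → N → N` as a `K`-bilinear map. -/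
def smulBilin : PS K n →ₗ[K] N →ₗ[K] N :=
  LinearMap.mk₂ K (fun s x => s • x)
    (fun s₁ s₂ x => add_smul s₁ s₂ x)
    (fun c s x => smul_assoc c s x)
    (fun s x y => smul_add s x y)
    (fun c s x => (smul_comm c s x).symm)

/-- The "contraction" part of the bar differential, `c_i : D_{i+1} → D_i`, defined
recursively by `c_0(s ⊗ x) = s • x` and
`c_{i+1}(s ⊗ s' ⊗ t) = (s s') ⊗ t - s ⊗ c_i(s' ⊗ t)`. -/
def barC : (i : ℕ) → ((barD K n N (i + 1)) →ₗ[K] (barD K n N i))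
  | 0 => TensorProduct.lift (smulBilin K n N)
  | (i + 1) =>
      (TensorProduct.map (LinearMap.mul' K (PS K n)) LinearMap.id).comp
        (TensorProduct.assoc K (PS K n) (PS K n) (barD K n N i)).symm.toLinearMap
      - TensorProduct.map LinearMap.id (barC i)

variable (M : Type) [AddCommGroup M] [Module K M] [Module (PS K n) M]
  [IsScalarTower K (PS K n) M]

/-- Right scalar multiplication `M ⊗[K] S → M` as a `K`-linear map. -/
def smulMapM : M ⊗[K] PS K n →ₗ[K] M :=
  TensorProduct.lift (LinearMap.mk₂ K (fun m s => s • m)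
    (fun m₁ m₂ s => smul_add s m₁ m₂)
    (fun c m s => smul_comm s c m)
    (fun m s₁ s₂ => add_smul s₁ s₂ m)
    (fun c m s => smul_assoc c s m))

/-- The bar differential `b_i : M ⊗ D_{i+1} → M ⊗ D_i`,
`b(m ⊗ s ⊗ t) = (s • m) ⊗ t - m ⊗ c_i(s ⊗ t)`.  The complex
`⋯ → M ⊗_K S^{⊗ i} ⊗_K N → ⋯ → M ⊗_K S ⊗_K N → M ⊗_K N → 0`
is the bar complex `M ⊗_S Bar(S, N)`, whose `i`-th homology is `Tor^S_i(M, N)`;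
it is a complex of graded vector spaces with degree-preserving differentials. -/
def barB (i : ℕ) : (M ⊗[K] (barD K n N (i + 1))) →ₗ[K] (M ⊗[K] (barD K n N i)) :=
  (TensorProduct.map (smulMapM K n M) LinearMap.id).comp
      (TensorProduct.assoc K M (PS K n) (barD K n N i)).symm.toLinearMap
  - TensorProduct.map LinearMap.id (barC K n N i)

/-- `dim_K Tor_i^S(M, N)_j`, the dimension of the degree-`j` component of the graded module
`Tor_i^S(M, N)` for graded modules `M`, `N`: it is computed as the homology of the degree-`j`
strand of the bar complex, namely `dim (ker b_i)_j - dim (im b_{i+1})_j`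
(for `i = 0`, `dim (M ⊗_K N)_j - dim (im b_1)_j`). -/
def torStrandDim (GM : ℤ → Submodule K M) (GN : ℤ → Submodule K N) : ℕ → ℤ → ℕ
  | 0, j =>
      Module.finrank K ↥(tensorGrade K GM (barDGrade K n N GN 0) j) -
        Module.finrank K
          ↥(LinearMap.range (barB K n N M 0) ⊓ tensorGrade K GM (barDGrade K n N GN 0) j)
  | (i + 1), j =>
      Module.finrank K
          ↥(LinearMap.ker (barB K n N M i) ⊓
              tensorGrade K GM (barDGrade K n N GN (i + 1)) j) -
        Module.finrank K
          ↥(LinearMap.range (barB K n N M (i + 1)) ⊓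
              tensorGrade K GM (barDGrade K n N GN (i + 1)) j)

/-- The quotient grading on `S/J`. -/
def quotGrade (J : Ideal (PS K n)) : ℤ → Submodule K (PS K n ⧸ J) := fun d =>
  (polyGrade K n d).map (Ideal.Quotient.mkₐ K J).toLinearMap

/-- The grading on an ideal `I ⊆ S` viewed as an `S`-module. -/
def idealGrade (I : Ideal (PS K n)) : ℤ → Submodule K ↥I := fun d =>
  (polyGrade K n d).comap ((Submodule.subtype I).restrictScalars K)

/-- `dim_K Tor_i^S(S/I, S/J)_j`. -/
def torQQ (I J : Ideal (PS K n)) (i : ℕ) (j : ℤ) : ℕ :=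
  torStrandDim K n (PS K n ⧸ J) (PS K n ⧸ I) (quotGrade K n I) (quotGrade K n J) i j

/-- `dim_K Tor_i^S(I, S/J)_j`. -/
def torIQ (I J : Ideal (PS K n)) (i : ℕ) (j : ℤ) : ℕ :=
  torStrandDim K n (PS K n ⧸ J) ↥I (idealGrade K n I) (quotGrade K n J) i j

/-- `a <_lex b` for the lexicographic order induced by `x_1 > x_2 > ⋯ > x_n`. -/
def lexLt (a b : Fin n →₀ ℕ) : Prop := Finsupp.Lex (· < ·) (· < ·) a b

/-- `a <_oplex b` for the (opposite) lexicographic order induced by `x_n > ⋯ > x_1`. -/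
def oplexLt (a b : Fin n →₀ ℕ) : Prop := Finsupp.Lex (· > ·) (· < ·) a b

/-- The total degree of an exponent vector. -/
def expDeg (m : Fin n →₀ ℕ) : ℕ := ∑ i, m i

/-- A monomial ideal: together with any polynomial it contains each of its monomials. -/
def IsMonomialIdeal (I : Ideal (PS K n)) : Prop :=
  ∀ f ∈ I, ∀ m ∈ f.support, MvPolynomial.monomial m (1 : K) ∈ I

/-- A lex ideal: a monomial ideal whose monomials form a lex set. -/
def IsLexIdeal (I : Ideal (PS K n)) : Prop :=
  IsMonomialIdeal K n I ∧ ∀ u v : Fin n →₀ ℕ, expDeg n u = expDeg n v →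
    MvPolynomial.monomial u (1 : K) ∈ I → lexLt n u v →
      MvPolynomial.monomial v (1 : K) ∈ I

/-- An opposite lex ideal: a monomial ideal whose monomials form an opposite lex set. -/
def IsOplexIdeal (I : Ideal (PS K n)) : Prop :=
  IsMonomialIdeal K n I ∧ ∀ u v : Fin n →₀ ℕ, expDeg n u = expDeg n v →
    MvPolynomial.monomial u (1 : K) ∈ I → oplexLt n u v →
      MvPolynomial.monomial v (1 : K) ∈ I

/-- The initial ideal `in_r(I)` of `I` with respect to a (strict) monomial order `r`:
the ideal generated by the `r`-maximal monomials of the nonzero elements of `I`. -/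
def initialIdealO (r : (Fin n →₀ ℕ) → (Fin n →₀ ℕ) → Prop) (I : Ideal (PS K n)) :
    Ideal (PS K n) :=
  Ideal.span {g | ∃ f ∈ I, ∃ m ∈ f.support,
    (∀ m' ∈ f.support, m' = m ∨ r m' m) ∧ g = MvPolynomial.monomial m (1 : K)}

/-!
The dimension of `Tor_i(I, S/J)_j` is computed by the degree `j` strand of the bar complex. All the
dimensions involved depend only on the Hilbert functions of `I` and `J`, except those of the spaces
of boundaries, so with fixed Hilbert functions more boundaries means smaller `Tor`. The dimension
of a space spanned by vectors that depend polynomially on parameters can only drop at a special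
point, hence boundaries can only be lost under a degeneration.

An initial ideal is the limit at `t = 0` of the translates of the ideal by a one-parameter subgroup
of the diagonal torus, whose weight represents the order in bounded degree. Hence for any `h` and
`k` the pair `(in_r(hI), in_{r'}(kJ))` has at most as many boundaries as `(s h I, t k J)` for some
diagonal `s` and `t`. Moving both ideals by `(s h)⁻¹` turns the latter pair into `(I, g₀ J)` with
`g₀ = (s h)⁻¹ t k`, which has at most as many boundaries as `(I, g J)` for general `g`. Only
finitely many `i` have to be considered, because `Tor_i` vanishes in degrees `j < i`; this makes the
open set of such `g` independent of `i`.
-/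

/-! ### Semicontinuity along polynomial families -/

section Zariski

variable {K} {σ : Type*}

/-- The filter of Zariski neighbourhoods of a point of affine space. -/
def zariskiNhds (a₀ : σ → K) : Filter (σ → K) where
  sets := {s | ∃ F : MvPolynomial σ K, eval a₀ F ≠ 0 ∧ ∀ a, eval a F ≠ 0 → a ∈ s}
  univ_sets := ⟨1, by simp, fun _ _ => trivial⟩
  sets_of_superset := fun ⟨F, hF₀, hF⟩ hst => ⟨F, hF₀, fun a ha => hst (hF a ha)⟩
  inter_sets := by
    rintro s t ⟨F, hF₀, hF⟩ ⟨G, hG₀, hG⟩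
    refine ⟨F * G, by simp [hF₀, hG₀], fun a ha => ?_⟩
    rw [map_mul, mul_ne_zero_iff] at ha
    exact ⟨hF a ha.1, hG a ha.2⟩

theorem eventually_zariskiNhds_iff {a₀ : σ → K} {P : (σ → K) → Prop} :
    (∀ᶠ a in zariskiNhds a₀, P a) ↔
      ∃ F : MvPolynomial σ K, eval a₀ F ≠ 0 ∧ ∀ a, eval a F ≠ 0 → P a :=
  Iff.rfl

theorem eval_ne_zero_of_eventually_zariskiNhds [Infinite K] {a₀ : σ → K} {P : (σ → K) → Prop}
    (hP : ∀ᶠ a in zariskiNhds a₀, P a) {G : MvPolynomial σ K} (hG : G ≠ 0) :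
    ∃ a, eval a G ≠ 0 ∧ P a := by
  obtain ⟨F, hF₀, hF⟩ := hP
  have hF_ne : F ≠ 0 := fun h => hF₀ (by rw [h, map_zero])
  obtain ⟨a, ha⟩ := not_forall.1 (mt MvPolynomial.funext (mul_ne_zero hG hF_ne))
  rw [map_zero, map_mul, mul_eq_zero, not_or] at ha
  exact ⟨a, ha.1, hF a ha.2⟩

variable {V W X : Type*} [AddCommGroup V] [Module K V] [AddCommGroup W] [Module K W]
  [AddCommGroup X] [Module K X]

variable (K σ V) in
/-- The families of vectors of `V` that depend polynomially on parameters `a : σ → K`. -/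
def polyFamily : Submodule K ((σ → K) → V) :=
  Submodule.span K {v | ∃ (F : MvPolynomial σ K) (w : V), v = fun a => eval a F • w}

theorem eval_smul_mem_polyFamily (F : MvPolynomial σ K) (w : V) :
    (fun a => eval a F • w) ∈ polyFamily K σ V :=
  Submodule.subset_span ⟨F, w, rfl⟩

theorem const_mem_polyFamily (w : V) : (fun _ => w) ∈ polyFamily K σ V := by
  simpa only [map_one, one_smul] using eval_smul_mem_polyFamily (1 : MvPolynomial σ K) w

theorem map₂_mem_polyFamily (f : V →ₗ[K] W →ₗ[K] X) {v : (σ → K) → V} {w : (σ → K) → W}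
    (hv : v ∈ polyFamily K σ V) (hw : w ∈ polyFamily K σ W) :
    (fun a => f (v a) (w a)) ∈ polyFamily K σ X := by
  induction hv, hw using Submodule.span_induction₂ with
  | mem_mem v w hv hw =>
    obtain ⟨F, x, rfl⟩ := hv
    obtain ⟨G, y, rfl⟩ := hw
    simp only [map_smul, LinearMap.smul_apply, smul_smul, ← map_mul]
    exact eval_smul_mem_polyFamily (G * F) (f x y)
  | zero_left w _ =>
    simp only [Pi.zero_apply, map_zero, LinearMap.zero_apply]
    exact zero_mem _
  | zero_right v _ =>
    simp only [Pi.zero_apply, map_zero]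
    exact zero_mem _
  | add_left u v w _ _ _ hu hv =>
    simp only [Pi.add_apply, map_add, LinearMap.add_apply]
    exact add_mem hu hv
  | add_right u v w _ _ _ hv hw =>
    simp only [Pi.add_apply, map_add]
    exact add_mem hv hw
  | smul_left c v w _ _ h =>
    simp only [Pi.smul_apply, map_smul, LinearMap.smul_apply]
    exact Submodule.smul_mem _ c h
  | smul_right c v w _ _ h =>
    simp only [Pi.smul_apply, map_smul]
    exact Submodule.smul_mem _ c h

theorem map_mem_polyFamily (f : V →ₗ[K] W) {v : (σ → K) → V} (hv : v ∈ polyFamily K σ V) :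
    (fun a => f (v a)) ∈ polyFamily K σ W := by
  simpa only [LinearMap.toSpanSingleton_apply, one_smul] using
    map₂_mem_polyFamily (LinearMap.toSpanSingleton K _ f) (const_mem_polyFamily 1) hv

theorem exists_eval_of_mem_polyFamily {v : (σ → K) → K} (hv : v ∈ polyFamily K σ K) :
    ∃ F : MvPolynomial σ K, ∀ a, eval a F = v a := by
  induction hv using Submodule.span_induction with
  | zero => exact ⟨0, fun a => map_zero _⟩
  | mem v hv =>
    obtain ⟨F, c, rfl⟩ := hv
    exact ⟨F * C c, fun a => by simp only [map_mul, eval_C, smul_eq_mul]⟩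
  | add u v _ _ hu hv =>
    obtain ⟨F, hF⟩ := hu
    obtain ⟨G, hG⟩ := hv
    exact ⟨F + G, fun a => by rw [map_add, hF, hG, Pi.add_apply]⟩
  | smul c v _ hv =>
    obtain ⟨F, hF⟩ := hv
    exact ⟨C c * F, fun a => by rw [map_mul, eval_C, hF, Pi.smul_apply, smul_eq_mul]⟩

/-- The limits at `a₀` of polynomial families of vectors lying in `U a` for all `a ∈ G`.
The parameter `a₀` itself need not be in `G`. -/
def limitSubmodule (G : Set (σ → K)) (a₀ : σ → K) (U : (σ → K) → Submodule K V) :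
    Submodule K V :=
  (polyFamily K σ V ⊓ Submodule.pi G U).map (LinearMap.proj a₀)

section Limit

variable {G : Set (σ → K)} {a₀ : σ → K} {U : (σ → K) → Submodule K V} {U₀ : Submodule K V}

theorem mem_limitSubmodule_iff {w : V} : w ∈ limitSubmodule G a₀ U ↔
    ∃ v ∈ polyFamily K σ V, (∀ a ∈ G, v a ∈ U a) ∧ v a₀ = w := by
  simp only [limitSubmodule, Submodule.mem_map, Submodule.mem_inf, Submodule.mem_pi, and_assoc,
    LinearMap.proj_apply]

theorem le_limitSubmodule_const (U : Submodule K V) : U ≤ limitSubmodule G a₀ fun _ => U :=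
  fun w hw => mem_limitSubmodule_iff.2 ⟨_, const_mem_polyFamily w, fun _ _ => hw, rfl⟩

theorem limitSubmodule_mono {U' : (σ → K) → Submodule K V} (h : ∀ a ∈ G, U a ≤ U' a) :
    limitSubmodule G a₀ U ≤ limitSubmodule G a₀ U' :=
  Submodule.map_mono (inf_le_inf_left _ fun _ hv a ha => h a ha (hv a ha))

theorem map_le_limitSubmodule (f : V →ₗ[K] W) (h : U₀ ≤ limitSubmodule G a₀ U) :
    U₀.map f ≤ limitSubmodule G a₀ fun a => (U a).map f := by
  rintro _ ⟨x, hx, rfl⟩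
  obtain ⟨v, hv, hvU, rfl⟩ := mem_limitSubmodule_iff.1 (h hx)
  exact mem_limitSubmodule_iff.2
    ⟨_, map_mem_polyFamily f hv, fun a ha => ⟨_, hvU a ha, rfl⟩, rfl⟩

theorem sup_le_limitSubmodule {U' : (σ → K) → Submodule K V} {U₀' : Submodule K V}
    (h : U₀ ≤ limitSubmodule G a₀ U) (h' : U₀' ≤ limitSubmodule G a₀ U') :
    U₀ ⊔ U₀' ≤ limitSubmodule G a₀ fun a => U a ⊔ U' a :=
  sup_le (h.trans (limitSubmodule_mono fun _ _ => le_sup_left))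
    (h'.trans (limitSubmodule_mono fun _ _ => le_sup_right))

/-- A basis of `U₀` extends to polynomial families in `U a`, and the determinant of their
coordinates with respect to that basis is a polynomial not vanishing at `a₀`. -/
theorem eventually_finrank_le_of_le_limitSubmodule [FiniteDimensional K U₀]
    (hU : ∀ a ∈ G, FiniteDimensional K (U a)) (h : U₀ ≤ limitSubmodule G a₀ U) :
    ∀ᶠ a in zariskiNhds a₀, a ∈ G → Module.finrank K U₀ ≤ Module.finrank K (U a) := by
  let b := Module.finBasis K U₀
  choose v hv hvU hv₀ using fun k => mem_limitSubmodule_iff.1 (h (b k).2)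
  obtain ⟨π, hπ⟩ := LinearMap.exists_leftInverse_of_injective U₀.subtype U₀.ker_subtype
  let coords : V →ₗ[K] Fin (Module.finrank K U₀) → K := b.equivFun.toLinearMap ∘ₗ π
  have hcoords₀ (k l) : coords (v k a₀) l = if k = l then 1 else 0 := by
    rw [hv₀, ← b.equivFun_self]
    exact congrFun (congrArg b.equivFun (LinearMap.congr_fun hπ (b k))) l
  choose F hF using fun k l => exists_eval_of_mem_polyFamily
    (map_mem_polyFamily (LinearMap.proj l ∘ₗ coords) (hv k))
  have heval (a) : (MvPolynomial.eval a).mapMatrix (Matrix.of F) =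
      Matrix.of fun k => coords (v k a) :=
    Matrix.ext fun k l => hF k l a
  refine ⟨(Matrix.of F).det, ?_, fun a hdet ha => ?_⟩
  · have hone : (MvPolynomial.eval a₀).mapMatrix (Matrix.of F) = 1 := by
      ext k l
      rw [heval, Matrix.of_apply, hcoords₀, Matrix.one_apply]
    rw [RingHom.map_det, hone, Matrix.det_one]
    exact one_ne_zero
  · rw [RingHom.map_det, heval] at hdet
    have hli : LinearIndependent K fun k => (⟨v k a, hvU k a ha⟩ : U a) :=
      .of_comp (coords ∘ₗ (U a).subtype) (Matrix.linearIndependent_rows_of_det_ne_zero hdet)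
    have := hU a ha
    simpa only [Fintype.card_fin] using hli.fintype_card_le_finrank

end Limit

end Zariski

/-! ### Graded tensor products -/

section Grading

variable {K}
variable {A B A' B' : Type} [AddCommGroup A] [Module K A] [AddCommGroup B] [Module K B]
  [AddCommGroup A'] [Module K A'] [AddCommGroup B'] [Module K B']
  {GA : ℤ → Submodule K A} {GB : ℤ → Submodule K B} {d : ℤ}

theorem tmul_mem_tensorGrade {p q : ℤ} (hpq : p + q = d) {a : A} {b : B} (ha : a ∈ GA p)
    (hb : b ∈ GB q) : a ⊗ₜ[K] b ∈ tensorGrade K GA GB d := by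
  obtain rfl : q = d - p := by omega
  exact Submodule.mem_iSup_of_mem p ⟨(⟨a, ha⟩ : GA p) ⊗ₜ (⟨b, hb⟩ : GB (d - p)), rfl⟩

theorem tensorGrade_le {U : Submodule K (A ⊗[K] B)}
    (h : ∀ p q, p + q = d → ∀ a ∈ GA p, ∀ b ∈ GB q, a ⊗ₜ[K] b ∈ U) :
    tensorGrade K GA GB d ≤ U := by
  refine iSup_le fun p => ?_
  rintro _ ⟨x, rfl⟩
  induction x using TensorProduct.induction_on with
  | zero => simp only [map_zero, zero_mem]
  | tmul a b => exact h p (d - p) (add_sub_cancel _ _) a a.2 b b.2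
  | add x y hx hy => simp only [map_add, add_mem hx hy]

theorem tensorGrade_le_of_nonneg (hA : ∀ p < 0, GA p = ⊥) (hB : ∀ p < 0, GB p = ⊥)
    {U : Submodule K (A ⊗[K] B)}
    (h : ∀ p q, 0 ≤ p → 0 ≤ q → p + q = d → ∀ a ∈ GA p, ∀ b ∈ GB q, a ⊗ₜ[K] b ∈ U) :
    tensorGrade K GA GB d ≤ U := by
  refine tensorGrade_le fun p q hpq a ha b hb => ?_
  rcases lt_or_ge p 0 with hp | hp
  · rw [hA p hp, Submodule.mem_bot] at ha
    simp only [ha, TensorProduct.zero_tmul, zero_mem]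
  rcases lt_or_ge q 0 with hq | hq
  · rw [hB q hq, Submodule.mem_bot] at hb
    simp only [hb, TensorProduct.tmul_zero, zero_mem]
  exact h p q hp hq hpq a ha b hb

theorem tensorGrade_mono {GA' : ℤ → Submodule K A} {GB' : ℤ → Submodule K B}
    (hA : ∀ p, GA p ≤ GA' p) (hB : ∀ p, GB p ≤ GB' p) :
    tensorGrade K GA GB d ≤ tensorGrade K GA' GB' d :=
  tensorGrade_le fun p q hpq _ ha _ hb => tmul_mem_tensorGrade hpq (hA p ha) (hB q hb)

theorem map_tensorGrade (f : A →ₗ[K] A') (g : B →ₗ[K] B') (GA : ℤ → Submodule K A)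
    (GB : ℤ → Submodule K B) (d : ℤ) :
    (tensorGrade K GA GB d).map (TensorProduct.map f g) =
      tensorGrade K (fun p => (GA p).map f) (fun p => (GB p).map g) d := by
  apply le_antisymm
  · rw [Submodule.map_le_iff_le_comap]
    refine tensorGrade_le fun p q hpq a ha b hb => ?_
    rw [Submodule.mem_comap, TensorProduct.map_tmul]
    exact tmul_mem_tensorGrade hpq ⟨a, ha, rfl⟩ ⟨b, hb, rfl⟩
  · refine tensorGrade_le ?_
    rintro p q hpq _ ⟨a, ha, rfl⟩ _ ⟨b, hb, rfl⟩
    exact ⟨a ⊗ₜ b, tmul_mem_tensorGrade hpq ha hb, rfl⟩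

theorem tensorGrade_le_limitSubmodule {σ : Type*} {G : Set (σ → K)} {a₀ : σ → K}
    {FA : (σ → K) → ℤ → Submodule K A} {FB : (σ → K) → ℤ → Submodule K B}
    (hA₀ : ∀ p < 0, GA p = ⊥) (hB₀ : ∀ p < 0, GB p = ⊥)
    (hA : ∀ p ≤ d, GA p ≤ limitSubmodule G a₀ fun a => FA a p)
    (hB : ∀ p ≤ d, GB p ≤ limitSubmodule G a₀ fun a => FB a p) :
    tensorGrade K GA GB d ≤ limitSubmodule G a₀ fun a => tensorGrade K (FA a) (FB a) d := by
  refine tensorGrade_le_of_nonneg hA₀ hB₀ fun p q hp hq hpq x hx y hy => ?_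
  obtain ⟨v, hv, hvA, rfl⟩ := mem_limitSubmodule_iff.1 (hA p (by omega) hx)
  obtain ⟨w, hw, hwB, rfl⟩ := mem_limitSubmodule_iff.1 (hB q (by omega) hy)
  exact mem_limitSubmodule_iff.2 ⟨_, map₂_mem_polyFamily (TensorProduct.mk K A B) hv hw,
    fun a ha => tmul_mem_tensorGrade hpq (hvA a ha) (hwB a ha), rfl⟩

theorem tensorGrade_eq_bot_of_neg (hA : ∀ p < 0, GA p = ⊥) (hB : ∀ p < 0, GB p = ⊥)
    (hd : d < 0) : tensorGrade K GA GB d = ⊥ :=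
  eq_bot_iff.2 <| tensorGrade_le_of_nonneg hA hB fun p q hp hq hpq => by omega

theorem finiteDimensional_tensorGrade (hA : ∀ p < 0, GA p = ⊥) (hB : ∀ p < 0, GB p = ⊥)
    (fA : ∀ p, FiniteDimensional K (GA p)) (fB : ∀ p, FiniteDimensional K (GB p)) :
    FiniteDimensional K (tensorGrade K GA GB d) := by
  have hle : tensorGrade K GA GB d ≤ ⨆ p : Finset.Icc (0 : ℤ) d,
      LinearMap.range (TensorProduct.map (GA p).subtype (GB (d - p)).subtype) := by
    refine tensorGrade_le_of_nonneg hA hB fun p q hp hq hpq a ha b hb => ?_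
    obtain rfl : q = d - p := by omega
    exact Submodule.mem_iSup_of_mem (⟨p, by rw [Finset.mem_Icc]; omega⟩ : Finset.Icc (0 : ℤ) d)
      ⟨(⟨a, ha⟩ : GA p) ⊗ₜ (⟨b, hb⟩ : GB (d - p)), rfl⟩
  exact Submodule.finiteDimensional_of_le hle

theorem iSup_tensorGrade_eq_top (hA : ⨆ p, GA p = ⊤) (hB : ⨆ p, GB p = ⊤) :
    ⨆ d, tensorGrade K GA GB d = ⊤ := by
  rw [eq_top_iff, ← TensorProduct.span_tmul_eq_top, Submodule.span_le]
  rintro _ ⟨a, b, rfl⟩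
  rw [SetLike.mem_coe]
  have ha : a ∈ ⨆ p, GA p := hA ▸ Submodule.mem_top
  have hb : b ∈ ⨆ p, GB p := hB ▸ Submodule.mem_top
  induction ha using Submodule.iSup_induction' with
  | zero => simp only [TensorProduct.zero_tmul, zero_mem]
  | add x y _ _ hx hy => simp only [TensorProduct.add_tmul, add_mem hx hy]
  | mem p a ha =>
    induction hb using Submodule.iSup_induction' with
    | zero => simp only [TensorProduct.tmul_zero, zero_mem]
    | add x y _ _ hx hy => simp only [TensorProduct.tmul_add, add_mem hx hy]
    | mem q b hb => exact Submodule.mem_iSup_of_mem (p + q) (tmul_mem_tensorGrade rfl ha hb)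

variable (GA) in
/-- A `ℤ`-grading of a vector space by finite dimensional subspaces vanishing in negative
degrees. Directness of the sum is encoded by the projections to the components. -/
structure IsLocallyFiniteGrading : Prop where
  eq_bot_of_neg : ∀ p < 0, GA p = ⊥
  finiteDimensional : ∀ p, FiniteDimensional K (GA p)
  iSup_eq_top : ⨆ p, GA p = ⊤
  exists_proj : ∀ d, ∃ π : A →ₗ[K] A, (∀ a ∈ GA d, π a = a) ∧ ∀ p ≠ d, ∀ a ∈ GA p, π a = 0

theorem proj_mem_of_le_iSup_inf {L : Submodule K A} (hL : L ≤ ⨆ p, GA p ⊓ L) {π : A →ₗ[K] A}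
    (hπ : ∀ a ∈ GA d, π a = a) (hπ₀ : ∀ p ≠ d, ∀ a ∈ GA p, π a = 0) {x : A} (hx : x ∈ L) :
    π x ∈ L := by
  suffices h : ⨆ p, GA p ⊓ L ≤ L.comap π from h (hL hx)
  refine iSup_le fun p a ⟨ha, haL⟩ => ?_
  rw [Submodule.mem_comap]
  rcases eq_or_ne p d with rfl | hne
  · rwa [hπ a ha]
  · rw [hπ₀ p hne a ha]
    exact zero_mem _

namespace IsLocallyFiniteGrading

protected theorem comap (hA : IsLocallyFiniteGrading GA) {f : B →ₗ[K] A}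
    (hf : Function.Injective f) (hrange : LinearMap.range f ≤ ⨆ p, GA p ⊓ LinearMap.range f) :
    IsLocallyFiniteGrading fun p => (GA p).comap f where
  eq_bot_of_neg p hp := by
    rw [hA.eq_bot_of_neg p hp, Submodule.comap_bot, LinearMap.ker_eq_bot.2 hf]
  finiteDimensional p :=
    have := hA.finiteDimensional p
    Module.Finite.of_injective (f.restrict fun _ hx => hx : (GA p).comap f →ₗ[K] GA p)
      fun x y hxy => Subtype.ext (hf (congrArg Subtype.val hxy))
  iSup_eq_top := by
    refine Submodule.map_injective_of_injective hf ?_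
    simp only [Submodule.map_iSup, Submodule.map_comap_eq, Submodule.map_top]
    exact le_antisymm (iSup_le fun p => inf_le_left) (by simpa only [inf_comm] using hrange)
  exists_proj d := by
    obtain ⟨π, hπ, hπ₀⟩ := hA.exists_proj d
    obtain ⟨ρ, hρ⟩ := f.exists_leftInverse_of_injective (LinearMap.ker_eq_bot.2 hf)
    refine ⟨ρ ∘ₗ π ∘ₗ f, fun b hb => ?_, fun p hp b hb => ?_⟩
    · rw [LinearMap.comp_apply, LinearMap.comp_apply, hπ (f b) hb]
      exact LinearMap.congr_fun hρ b
    · rw [LinearMap.comp_apply, LinearMap.comp_apply, hπ₀ p hp (f b) hb, map_zero]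

protected theorem map (hA : IsLocallyFiniteGrading GA) {f : A →ₗ[K] B}
    (hf : Function.Surjective f) (hker : LinearMap.ker f ≤ ⨆ p, GA p ⊓ LinearMap.ker f) :
    IsLocallyFiniteGrading fun p => (GA p).map f where
  eq_bot_of_neg p hp := by rw [hA.eq_bot_of_neg p hp, Submodule.map_bot]
  finiteDimensional p :=
    have := hA.finiteDimensional p
    inferInstance
  iSup_eq_top := by
    rw [← Submodule.map_iSup, hA.iSup_eq_top, Submodule.map_top, LinearMap.range_eq_top.2 hf]
  exists_proj d := by
    obtain ⟨π, hπ, hπ₀⟩ := hA.exists_proj d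
    obtain ⟨σ, hσ⟩ := f.exists_rightInverse_of_surjective (LinearMap.range_eq_top.2 hf)
    have hfπ (a : A) : f (π (σ (f a))) = f (π a) := by
      have hmem : σ (f a) - a ∈ LinearMap.ker f := by
        rw [LinearMap.mem_ker, map_sub, sub_eq_zero]
        exact LinearMap.congr_fun hσ (f a)
      have hπmem := proj_mem_of_le_iSup_inf hker hπ hπ₀ hmem
      rwa [LinearMap.mem_ker, map_sub, map_sub, sub_eq_zero] at hπmem
    refine ⟨f ∘ₗ π ∘ₗ σ, ?_, ?_⟩
    · rintro _ ⟨a, ha, rfl⟩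
      exact (hfπ a).trans (congrArg f (hπ a ha))
    · rintro p hp _ ⟨a, ha, rfl⟩
      exact (hfπ a).trans ((congrArg f (hπ₀ p hp a ha)).trans (map_zero f))

theorem exists_proj_tensorGrade (hA : IsLocallyFiniteGrading GA)
    (hB : IsLocallyFiniteGrading GB) (d : ℤ) : ∃ π : A ⊗[K] B →ₗ[K] A ⊗[K] B,
      (∀ x ∈ tensorGrade K GA GB d, π x = x) ∧
      ∀ e ≠ d, ∀ x ∈ tensorGrade K GA GB e, π x = 0 := by
  choose f hf hf₀ using hA.exists_proj
  choose g hg hg₀ using hB.exists_proj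
  let π := ∑ p ∈ Finset.Icc 0 d, TensorProduct.map (f p) (g (d - p))
  have hπ (a : A) (b : B) : π (a ⊗ₜ b) = ∑ p ∈ Finset.Icc 0 d, f p a ⊗ₜ g (d - p) b := by
    simp only [π, LinearMap.sum_apply, TensorProduct.map_tmul]
  have hid : tensorGrade K GA GB d ≤ LinearMap.eqLocus π LinearMap.id := by
    refine tensorGrade_le_of_nonneg hA.eq_bot_of_neg hB.eq_bot_of_neg
      fun p q hp hq hpq a ha b hb => ?_
    obtain rfl : q = d - p := by omega
    rw [LinearMap.mem_eqLocus, hπ, Finset.sum_eq_single_of_mem p (by rw [Finset.mem_Icc]; omega)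
      fun p' _ hne => by rw [hf₀ p' p hne.symm a ha, TensorProduct.zero_tmul],
      hf p a ha, hg _ b hb, LinearMap.id_apply]
  have hzero (e : ℤ) (hed : e ≠ d) : tensorGrade K GA GB e ≤ LinearMap.ker π := by
    refine tensorGrade_le fun p q hpq a ha b hb => ?_
    refine (hπ a b).trans (Finset.sum_eq_zero fun p' _ => ?_)
    rcases eq_or_ne p p' with rfl | hne
    · rw [hg₀ (d - p) q (by omega) b hb, TensorProduct.tmul_zero]
    · rw [hf₀ p' p hne a ha, TensorProduct.zero_tmul]
  exact ⟨π, fun x hx => hid hx, fun e hed x hx => hzero e hed hx⟩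

protected theorem tensorGrade (hA : IsLocallyFiniteGrading GA) (hB : IsLocallyFiniteGrading GB) :
    IsLocallyFiniteGrading (tensorGrade K GA GB) where
  eq_bot_of_neg _ := tensorGrade_eq_bot_of_neg hA.eq_bot_of_neg hB.eq_bot_of_neg
  finiteDimensional _ := finiteDimensional_tensorGrade hA.eq_bot_of_neg hB.eq_bot_of_neg
    hA.finiteDimensional hB.finiteDimensional
  iSup_eq_top := iSup_tensorGrade_eq_top hA.iSup_eq_top hB.iSup_eq_top
  exists_proj := hA.exists_proj_tensorGrade hB

theorem range_inf_eq_map (hA : IsLocallyFiniteGrading GA) (hB : IsLocallyFiniteGrading GB)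
    (f : A →ₗ[K] B) (hf : ∀ p, (GA p).map f ≤ GB p) (d : ℤ) :
    LinearMap.range f ⊓ GB d = (GA d).map f := by
  refine le_antisymm ?_ (le_inf LinearMap.map_le_range (hf d))
  obtain ⟨π, hπ, hπ₀⟩ := hA.exists_proj d
  obtain ⟨ψ, hψ, hψ₀⟩ := hB.exists_proj d
  have hcomm (z : A) : ψ (f z) = f (π z) ∧ π z ∈ GA d := by
    have hz : z ∈ ⨆ p, GA p := hA.iSup_eq_top ▸ Submodule.mem_top
    induction hz using Submodule.iSup_induction' with
    | zero => simp only [map_zero, zero_mem, and_self]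
    | add x y _ _ hx hy => simp only [map_add, hx.1, hy.1, add_mem hx.2 hy.2, and_self]
    | mem p z hz =>
      have hfz : f z ∈ GB p := hf p (Submodule.mem_map_of_mem hz)
      rcases eq_or_ne p d with rfl | hne
      · rw [hπ z hz, hψ _ hfz]
        exact ⟨rfl, hz⟩
      · rw [hπ₀ p hne z hz, hψ₀ p hne _ hfz, map_zero]
        exact ⟨rfl, zero_mem _⟩
  rintro _ ⟨⟨z, rfl⟩, hz⟩
  rw [← hψ _ hz, (hcomm z).1]
  exact Submodule.mem_map_of_mem (hcomm z).2

end IsLocallyFiniteGrading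

theorem finrank_ker_inf_add_finrank_map (f : A →ₗ[K] B) (U : Submodule K A)
    [FiniteDimensional K U] :
    Module.finrank K ↥(LinearMap.ker f ⊓ U) + Module.finrank K (U.map f) =
      Module.finrank K U := by
  have hker : LinearMap.ker f ⊓ U = (LinearMap.ker (f.domRestrict U)).map U.subtype := by
    rw [LinearMap.ker_domRestrict, Submodule.map_comap_subtype, inf_comm]
  rw [hker, Submodule.finrank_map_subtype_eq, ← LinearMap.range_domRestrict, add_comm,
    LinearMap.finrank_range_add_finrank_ker]

theorem finrank_map_add_finrank {f : A →ₗ[K] B} {Y U Z : Submodule K A}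
    (hZ : FiniteDimensional K Z) (hker : LinearMap.ker f ⊓ Z = Y) (hYU : Y ≤ U) (hUZ : U ≤ Z) :
    Module.finrank K (U.map f) + Module.finrank K Y = Module.finrank K U := by
  have := Submodule.finiteDimensional_of_le hUZ
  have hkerU : LinearMap.ker f ⊓ U = Y :=
    le_antisymm ((inf_le_inf_left _ hUZ).trans hker.le) (le_inf (hker.ge.trans inf_le_left) hYU)
  rw [← hkerU, add_comm, finrank_ker_inf_add_finrank_map]

end Grading

/-! ### Homogeneous polynomials and ideals -/

section HomogeneousIdeals

variable {K n}

theorem polyGrade_natCast (d : ℕ) :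
    polyGrade K n d = homogeneousSubmodule (Fin n) K d := by
  rw [polyGrade, if_pos d.cast_nonneg, Int.toNat_natCast]

theorem polyGrade_eq_bot_of_neg (p : ℤ) (hp : p < 0) : polyGrade K n p = ⊥ :=
  if_neg hp.not_ge

theorem mem_polyGrade_iff {p : ℤ} {x : PS K n} :
    x ∈ polyGrade K n p ↔ ∀ m ∈ x.support, (m.degree : ℤ) = p := by
  rcases lt_or_ge p 0 with hp | hp
  · rw [polyGrade_eq_bot_of_neg p hp, Submodule.mem_bot, ← support_eq_empty,
      Finset.eq_empty_iff_forall_notMem]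
    exact forall₂_congr fun m _ => ⟨False.elim, fun h => by omega⟩
  · lift p to ℕ using hp
    rw [polyGrade_natCast, mem_homogeneousSubmodule, IsHomogeneous, IsWeightedHomogeneous]
    simp only [mem_support_iff, Nat.cast_inj, Finsupp.degree_eq_weight_one]
    rfl

theorem mul_mem_polyGrade {p q : ℤ} {s t : PS K n} (hs : s ∈ polyGrade K n p)
    (ht : t ∈ polyGrade K n q) : s * t ∈ polyGrade K n (p + q) := by
  rw [mem_polyGrade_iff] at *
  intro m hm
  obtain ⟨a, ha, b, hb, rfl⟩ := Finset.mem_add.1 (support_mul s t hm)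
  rw [map_add, Nat.cast_add, hs a ha, ht b hb]

/-- The component of degree `p` of an ideal of `S`, as a subspace of `S`. -/
def gradedPart (J : Ideal (PS K n)) (p : ℤ) : Submodule K (PS K n) :=
  polyGrade K n p ⊓ J.restrictScalars K

theorem mem_gradedPart_iff {J : Ideal (PS K n)} {p : ℤ} {x : PS K n} :
    x ∈ gradedPart J p ↔ x ∈ polyGrade K n p ∧ x ∈ J :=
  Iff.rfl

theorem gradedPart_top : gradedPart (⊤ : Ideal (PS K n)) = polyGrade K n := by
  ext p x
  simp only [mem_gradedPart_iff, Submodule.mem_top, and_true]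

theorem gradedPart_le_polyGrade (J : Ideal (PS K n)) (p : ℤ) :
    gradedPart J p ≤ polyGrade K n p :=
  inf_le_left

theorem iSup_gradedPart {J : Ideal (PS K n)} (hJ : IsHomog K n J) :
    ⨆ p, gradedPart J p = J.restrictScalars K := by
  refine le_antisymm (iSup_le fun p => inf_le_right) fun x hx => ?_
  rw [← sum_homogeneousComponent x]
  refine Submodule.sum_mem _ fun d _ => Submodule.mem_iSup_of_mem (d : ℤ) ⟨?_, hJ x hx d⟩
  rw [SetLike.mem_coe, polyGrade_natCast]
  exact homogeneousComponent_isHomogeneous d x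

theorem exists_linearMap_eqOn_polyGrade {V : Type*} [AddCommGroup V] [Module K V]
    (f : ℤ → (PS K n →ₗ[K] V)) :
    ∃ F : PS K n →ₗ[K] V, ∀ p, ∀ x ∈ polyGrade K n p, F x = f p x := by
  let F := (basisMonomials (Fin n) K).constr K fun m => f m.degree (monomial m 1)
  have hF (m : Fin n →₀ ℕ) : F (monomial m 1) = f m.degree (monomial m 1) := by
    have hbasis := (basisMonomials (Fin n) K).constr_basis K
      (fun m => f m.degree (monomial m 1)) m
    rwa [coe_basisMonomials] at hbasis
  refine ⟨F, fun p x hx => ?_⟩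
  rw [mem_polyGrade_iff] at hx
  rw [as_sum x, map_sum, map_sum]
  refine Finset.sum_congr rfl fun m hm => ?_
  rw [← mul_one (coeff m x), ← smul_eq_mul, ← smul_monomial, map_smul, map_smul, hF, hx m hm]

theorem isLocallyFiniteGrading_polyGrade : IsLocallyFiniteGrading (polyGrade K n) where
  eq_bot_of_neg := polyGrade_eq_bot_of_neg
  finiteDimensional p := by
    have hle : polyGrade K n p ≤ restrictTotalDegree (Fin n) K p.toNat := by
      intro x hx
      rw [mem_restrictTotalDegree, totalDegree]
      refine Finset.sup_le fun m hm => ?_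
      rw [← mem_polyGrade_iff.1 hx m hm]
      rfl
    exact Submodule.finiteDimensional_of_le hle
  iSup_eq_top := by
    rw [← gradedPart_top, iSup_gradedPart (J := ⊤) fun _ _ _ => Submodule.mem_top,
      Submodule.restrictScalars_top]
  exists_proj d := by
    obtain ⟨F, hF⟩ := exists_linearMap_eqOn_polyGrade
      fun p => if p = d then (LinearMap.id : PS K n →ₗ[K] PS K n) else 0
    exact ⟨F, fun x hx => by rw [hF d x hx, if_pos rfl, LinearMap.id_apply],
      fun p hp x hx => by rw [hF p x hx, if_neg hp, LinearMap.zero_apply]⟩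

instance finiteDimensional_gradedPart (J : Ideal (PS K n)) (p : ℤ) :
    FiniteDimensional K (gradedPart J p) :=
  have := (isLocallyFiniteGrading_polyGrade (K := K) (n := n)).finiteDimensional p
  Submodule.finiteDimensional_of_le (gradedPart_le_polyGrade J p)

theorem isLocallyFiniteGrading_idealGrade {I : Ideal (PS K n)} (hI : IsHomog K n I) :
    IsLocallyFiniteGrading (idealGrade K n I) := by
  have hrange : LinearMap.range (I.subtype.restrictScalars K) = I.restrictScalars K := by
    rw [LinearMap.range_restrictScalars, Submodule.range_subtype]
  refine isLocallyFiniteGrading_polyGrade.comap Subtype.val_injective ?_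
  rw [hrange]
  exact (iSup_gradedPart hI).ge

theorem isLocallyFiniteGrading_quotGrade {J : Ideal (PS K n)} (hJ : IsHomog K n J) :
    IsLocallyFiniteGrading (quotGrade K n J) := by
  have hker : LinearMap.ker (Ideal.Quotient.mkₐ K J).toLinearMap = J.restrictScalars K :=
    Submodule.ext fun _ => Ideal.Quotient.eq_zero_iff_mem
  refine isLocallyFiniteGrading_polyGrade.map (Ideal.Quotient.mkₐ_surjective K J) ?_
  rw [hker]
  exact (iSup_gradedPart hJ).ge

theorem map_subtype_idealGrade (I : Ideal (PS K n)) (p : ℤ) :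
    (idealGrade K n I p).map (I.subtype.restrictScalars K) = gradedPart I p := by
  rw [idealGrade, Submodule.map_comap_eq, LinearMap.range_restrictScalars,
    Submodule.range_subtype, inf_comm]
  rfl

theorem exists_gradedRetraction {J : Ideal (PS K n)} (hJ : IsHomog K n J) :
    ∃ F : PS K n →ₗ[K] PS K n,
      (∀ p, (polyGrade K n p).map F ≤ gradedPart J p) ∧ ∀ x ∈ J, F x = x := by
  choose g hg using fun p => LinearMap.exists_extend (LinearMap.id (R := K) (M := gradedPart J p))
  obtain ⟨F, hF⟩ := exists_linearMap_eqOn_polyGrade fun p => (gradedPart J p).subtype ∘ₗ g p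
  have hFJ : ⨆ p, gradedPart J p ≤ LinearMap.eqLocus F LinearMap.id := iSup_le fun p x hx =>
    (hF p x hx.1).trans (congrArg Subtype.val (LinearMap.congr_fun (hg p) ⟨x, hx⟩))
  refine ⟨F, fun p => ?_, fun x hx => hFJ ((iSup_gradedPart hJ).ge hx)⟩
  rintro _ ⟨x, hx, rfl⟩
  rw [hF p x hx]
  exact (g p x).2

theorem exists_map_gradedPart_eq {I I' : Ideal (PS K n)}
    (h : ∀ p, Module.finrank K (gradedPart I p) = Module.finrank K (gradedPart I' p)) :
    ∃ F : PS K n →ₗ[K] PS K n, ∀ p, (gradedPart I p).map F = gradedPart I' p := by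
  choose g hg using fun p =>
    LinearMap.exists_extend (LinearEquiv.ofFinrankEq _ _ (h p)).toLinearMap
  obtain ⟨F, hF⟩ := exists_linearMap_eqOn_polyGrade fun p => (gradedPart I' p).subtype ∘ₗ g p
  refine ⟨F, fun p => ?_⟩
  have hFp : F ∘ₗ (gradedPart I p).subtype =
      (gradedPart I' p).subtype ∘ₗ (LinearEquiv.ofFinrankEq _ _ (h p)).toLinearMap :=
    LinearMap.ext fun x => (hF p x x.2.1).trans
      (congrArg Subtype.val (LinearMap.congr_fun (hg p) x))
  rw [← Submodule.range_subtype (gradedPart I p), ← LinearMap.range_comp, hFp,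
    LinearMap.range_comp, LinearEquiv.range, Submodule.map_top, Submodule.range_subtype]

end HomogeneousIdeals

/-! ### The bar complex -/

section BarSpaces

variable {K n}
variable {N N' N'' : Type} [AddCommGroup N] [Module K N] [AddCommGroup N'] [Module K N']
  [AddCommGroup N''] [Module K N'']
  {V : Type*} [AddCommGroup V] [Module K V]

/-- The tensors `s ⊗ x` of `D_{i+1} = S ⊗ D_i`, typed so that `barD` is never unfolded. -/
def barTmul (i : ℕ) : PS K n →ₗ[K] barD K n N i →ₗ[K] barD K n N (i + 1) :=
  TensorProduct.mk K (PS K n) (barD K n N i)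

theorem barD_hom_ext {i : ℕ} {f g : barD K n N (i + 1) →ₗ[K] V}
    (h : ∀ s x, f (barTmul i s x) = g (barTmul i s x)) : f = g :=
  TensorProduct.ext' h

theorem barTmul_mem_barDGrade {GN : ℤ → Submodule K N} {i : ℕ} {p q d : ℤ} (hpq : p + q = d)
    {s : PS K n} (hs : s ∈ polyGrade K n p) {x : barD K n N i}
    (hx : x ∈ barDGrade K n N GN i q) : barTmul i s x ∈ barDGrade K n N GN (i + 1) d :=
  tmul_mem_tensorGrade hpq hs hx

theorem barDGrade_succ_le {GN : ℤ → Submodule K N} {i : ℕ} {d : ℤ}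
    {U : Submodule K (barD K n N (i + 1))}
    (h : ∀ p q, p + q = d → ∀ s ∈ polyGrade K n p, ∀ x ∈ barDGrade K n N GN i q,
      barTmul i s x ∈ U) :
    barDGrade K n N GN (i + 1) d ≤ U :=
  tensorGrade_le h

/-- The map `φ ⊗ ⋯ ⊗ φ ⊗ β` between the spaces `S^{⊗ i} ⊗ N` of the bar complex. -/
def barMap (φ : PS K n →ₗ[K] PS K n) (β : N →ₗ[K] N') : (i : ℕ) → barD K n N i →ₗ[K] barD K n N' i
  | 0 => β
  | i + 1 => TensorProduct.map φ (barMap φ β i)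

theorem barMap_barTmul (φ : PS K n →ₗ[K] PS K n) (β : N →ₗ[K] N') (i : ℕ) (s : PS K n)
    (x : barD K n N i) : barMap φ β (i + 1) (barTmul i s x) = barTmul i (φ s) (barMap φ β i x) :=
  rfl

theorem barMap_comp (φ ψ : PS K n →ₗ[K] PS K n) (β : N →ₗ[K] N') (γ : N' →ₗ[K] N'') (i : ℕ) :
    barMap ψ γ i ∘ₗ barMap φ β i = barMap (ψ ∘ₗ φ) (γ ∘ₗ β) i := by
  induction i with
  | zero => rfl
  | succ i ih =>
    refine barD_hom_ext fun s x => ?_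
    simp only [LinearMap.comp_apply, barMap_barTmul, ← ih]

theorem barMap_id (i : ℕ) :
    barMap (LinearMap.id : PS K n →ₗ[K] PS K n) (LinearMap.id : N →ₗ[K] N) i = LinearMap.id := by
  induction i with
  | zero => rfl
  | succ i ih =>
    refine barD_hom_ext fun s x => ?_
    simp only [barMap_barTmul, ih, LinearMap.id_apply]

theorem barMap_add (φ : PS K n →ₗ[K] PS K n) (β γ : N →ₗ[K] N') (i : ℕ) :
    barMap φ (β + γ) i = barMap φ β i + barMap φ γ i := by
  induction i with
  | zero => rfl
  | succ i ih =>
    refine barD_hom_ext fun s x => ?_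
    simp only [barMap_barTmul, ih, LinearMap.add_apply, map_add]

theorem map_barDGrade {φ : PS K n →ₗ[K] PS K n}
    (hφ : ∀ p, (polyGrade K n p).map φ = polyGrade K n p) (β : N →ₗ[K] N')
    (GN : ℤ → Submodule K N) (i : ℕ) (d : ℤ) :
    (barDGrade K n N GN i d).map (barMap φ β i) =
      barDGrade K n N' (fun p => (GN p).map β) i d := by
  induction i generalizing d with
  | zero => rfl
  | succ i ih =>
    refine (map_tensorGrade φ (barMap φ β i) (polyGrade K n) (barDGrade K n N GN i) d).trans ?_
    simp only [hφ, ih, barDGrade]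

theorem barDGrade_mono {GN GN' : ℤ → Submodule K N} (h : ∀ p, GN p ≤ GN' p) (i : ℕ) (d : ℤ) :
    barDGrade K n N GN i d ≤ barDGrade K n N GN' i d := by
  induction i generalizing d with
  | zero => exact h d
  | succ i ih => exact tensorGrade_mono (fun _ => le_rfl) ih

theorem barDGrade_bot (i : ℕ) (d : ℤ) : barDGrade K n N (fun _ => ⊥) i d = ⊥ := by
  induction i generalizing d with
  | zero => rfl
  | succ i ih =>
    refine eq_bot_iff.2 (barDGrade_succ_le fun p q _ s _ x hx => ?_)
    rw [ih, Submodule.mem_bot] at hx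
    simp only [hx, map_zero, zero_mem]

theorem barDGrade_eq_bot_of_neg {GN : ℤ → Submodule K N} (hN : ∀ p < 0, GN p = ⊥) (i : ℕ) (d : ℤ)
    (hd : d < 0) : barDGrade K n N GN i d = ⊥ := by
  induction i generalizing d with
  | zero => exact hN d hd
  | succ i ih => exact tensorGrade_eq_bot_of_neg polyGrade_eq_bot_of_neg ih hd

theorem barDGrade_le_limitSubmodule {σ : Type*} {G : Set (σ → K)} {a₀ : σ → K}
    {GN : ℤ → Submodule K N} {FN : (σ → K) → ℤ → Submodule K N} (hN : ∀ p < 0, GN p = ⊥) {d : ℤ}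
    (h : ∀ p ≤ d, GN p ≤ limitSubmodule G a₀ fun a => FN a p) (i : ℕ) :
    barDGrade K n N GN i d ≤ limitSubmodule G a₀ fun a => barDGrade K n N (FN a) i d := by
  induction i generalizing d with
  | zero => exact h d le_rfl
  | succ i ih =>
    exact tensorGrade_le_limitSubmodule polyGrade_eq_bot_of_neg (barDGrade_eq_bot_of_neg hN i)
      (fun _ _ => le_limitSubmodule_const _) fun p hp => ih fun q hq => h q (hq.trans hp)

theorem IsLocallyFiniteGrading.barDGrade {GN : ℤ → Submodule K N}
    (hN : IsLocallyFiniteGrading GN) (i : ℕ) : IsLocallyFiniteGrading (barDGrade K n N GN i) := by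
  induction i with
  | zero => exact hN
  | succ i ih => exact isLocallyFiniteGrading_polyGrade.tensorGrade ih

variable (n) in
/-- The degree `d` component of `M ⊗ S^{⊗ i} ⊗ N`, the `i`-th term of the bar complex. -/
abbrev barStrand {M : Type} [AddCommGroup M] [Module K M] (GM : ℤ → Submodule K M)
    (GN : ℤ → Submodule K N) (i : ℕ) (d : ℤ) : Submodule K (M ⊗[K] barD K n N i) :=
  tensorGrade K GM (barDGrade K n N GN i) d

/-- The projection of `S` onto its subspace of constants, along the polynomials with no constant
term. -/
def constPart : PS K n →ₗ[K] PS K n :=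
  Algebra.linearMap K (PS K n) ∘ₗ lcoeff K 0

theorem constPart_apply (s : PS K n) : constPart s = C (constantCoeff s) :=
  rfl

theorem constPart_one : constPart (1 : PS K n) = 1 := by
  rw [constPart_apply, map_one, map_one]

theorem constPart_mul (s t : PS K n) : constPart (s * t) = constPart s * constPart t := by
  simp only [constPart_apply, map_mul]

theorem constPart_sub_constPart (s : PS K n) : constPart (s - constPart s) = 0 := by
  simp only [constPart_apply, map_sub, constantCoeff_C, sub_self]

theorem constPart_eq_self {s : PS K n} (hs : s ∈ polyGrade K n 0) : constPart s = s := by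
  ext m
  rw [constPart_apply, coeff_C]
  split_ifs with hm
  · rw [← hm, constantCoeff_eq]
  · by_contra hne
    have hdeg := mem_polyGrade_iff.1 hs m (mem_support_iff.2 (Ne.symm hne))
    exact hm ((Finsupp.degree_eq_zero_iff m).1 (Nat.cast_eq_zero.1 hdeg)).symm

theorem constPart_eq_zero {p : ℤ} (hp : p ≠ 0) {s : PS K n} (hs : s ∈ polyGrade K n p) :
    constPart s = 0 := by
  rw [constPart_apply, constantCoeff_eq, C_eq_zero, ← notMem_support_iff]
  intro h0
  exact hp (by rw [← mem_polyGrade_iff.1 hs 0 h0, map_zero, Nat.cast_zero])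

theorem barD_hom_ext_constPart {i : ℕ} {f g : barD K n N (i + 1) →ₗ[K] V}
    (h1 : ∀ x, f (barTmul i 1 x) = g (barTmul i 1 x))
    (h0 : ∀ s, constPart s = 0 → ∀ x, f (barTmul i s x) = g (barTmul i s x)) : f = g := by
  refine barD_hom_ext fun s x => ?_
  have hs : s = constantCoeff s • (1 : PS K n) + (s - constPart s) := by
    rw [constPart_apply, ← C_eq_smul_one, add_sub_cancel]
  rw [hs]
  simp only [map_add, LinearMap.add_apply, map_smul, LinearMap.smul_apply, h1,
    h0 _ (constPart_sub_constPart s)]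

/-- The contracting homotopy of the bar complex. On `s_1 ⊗ ⋯ ⊗ s_i ⊗ x`, with every `s_k` either
`1` or without constant term, it doubles the first factor `1`, up to sign; it vanishes if there is
no such factor. -/
def barHomotopy : (i : ℕ) → barD K n N i →ₗ[K] barD K n N (i + 1)
  | 0 => 0
  | i + 1 => TensorProduct.map constPart (barTmul i 1) -
      TensorProduct.map (LinearMap.id - constPart) (barHomotopy i)

/-- The projection of `S^{⊗ i} ⊗ N` onto its degenerate part, which is spanned by the tensors
`s_1 ⊗ ⋯ ⊗ s_i ⊗ x` with some `s_k = 1`, along the tensors whose factors `s_k` have no constant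
term. -/
def barDegenerate : (i : ℕ) → barD K n N i →ₗ[K] barD K n N i
  | 0 => 0
  | i + 1 => TensorProduct.map constPart LinearMap.id +
      TensorProduct.map (LinearMap.id - constPart) (barDegenerate i)

theorem barHomotopy_barTmul (i : ℕ) (s : PS K n) (x : barD K n N i) :
    barHomotopy (i + 1) (barTmul i s x) = barTmul (i + 1) (constPart s) (barTmul i 1 x) -
      barTmul (i + 1) (s - constPart s) (barHomotopy i x) :=
  rfl

theorem barDegenerate_barTmul (i : ℕ) (s : PS K n) (x : barD K n N i) :
    barDegenerate (i + 1) (barTmul i s x) =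
      barTmul i (constPart s) x + barTmul i (s - constPart s) (barDegenerate i x) :=
  rfl

theorem barHomotopy_barTmul_one (i : ℕ) (x : barD K n N i) :
    barHomotopy (i + 1) (barTmul i 1 x) = barTmul (i + 1) 1 (barTmul i 1 x) := by
  rw [barHomotopy_barTmul, constPart_one, sub_self, map_zero, LinearMap.zero_apply, sub_zero]

theorem barHomotopy_barTmul_of_constPart (i : ℕ) {s : PS K n} (hs : constPart s = 0)
    (x : barD K n N i) :
    barHomotopy (i + 1) (barTmul i s x) = -barTmul (i + 1) s (barHomotopy i x) := by
  rw [barHomotopy_barTmul, hs, map_zero, LinearMap.zero_apply, zero_sub, sub_zero]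

theorem barDegenerate_barTmul_one (i : ℕ) (x : barD K n N i) :
    barDegenerate (i + 1) (barTmul i 1 x) = barTmul i 1 x := by
  rw [barDegenerate_barTmul, constPart_one, sub_self, map_zero, LinearMap.zero_apply, add_zero]

theorem barDegenerate_barTmul_of_constPart (i : ℕ) {s : PS K n} (hs : constPart s = 0)
    (x : barD K n N i) :
    barDegenerate (i + 1) (barTmul i s x) = barTmul i s (barDegenerate i x) := by
  rw [barDegenerate_barTmul, hs, map_zero, LinearMap.zero_apply, zero_add, sub_zero]

theorem barDGrade_le_eqLocus_barDegenerate {GN : ℤ → Submodule K N} (hN : ∀ p < 0, GN p = ⊥)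
    (i : ℕ) {d : ℤ} (hd : d < i) :
    barDGrade K n N GN i d ≤ LinearMap.eqLocus (barDegenerate i) LinearMap.id := by
  induction i generalizing d with
  | zero => exact (hN d hd).trans_le bot_le
  | succ i ih =>
    refine barDGrade_succ_le fun p q hpq s hs x hx => ?_
    rw [LinearMap.mem_eqLocus, LinearMap.id_apply]
    rcases lt_trichotomy p 0 with hp | rfl | hp
    · rw [polyGrade_eq_bot_of_neg p hp, Submodule.mem_bot] at hs
      simp only [hs, map_zero, LinearMap.zero_apply]
    · rw [barDegenerate_barTmul, constPart_eq_self hs, sub_self, map_zero, LinearMap.zero_apply,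
        add_zero]
    · have hxq : barDegenerate i x = x := ih (by push_cast at hd; omega) hx
      rw [barDegenerate_barTmul_of_constPart i (constPart_eq_zero hp.ne' hs), hxq]

end BarSpaces

section BarDifferential

variable {K n}
variable {N N' M M' : Type}
  [AddCommGroup N] [Module K N] [Module (PS K n) N] [IsScalarTower K (PS K n) N]
  [AddCommGroup N'] [Module K N'] [Module (PS K n) N'] [IsScalarTower K (PS K n) N']
  [AddCommGroup M] [Module K M] [Module (PS K n) M] [IsScalarTower K (PS K n) M]
  [AddCommGroup M'] [Module K M'] [Module (PS K n) M'] [IsScalarTower K (PS K n) M']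
  {V : Type*} [AddCommGroup V] [Module K V]

theorem barC_zero_barTmul (s : PS K n) (x : N) : barC K n N 0 (barTmul (N := N) 0 s x) = s • x :=
  rfl

theorem barC_succ_barTmul (i : ℕ) (s t : PS K n) (x : barD K n N i) :
    barC K n N (i + 1) (barTmul (i + 1) s (barTmul i t x)) =
      barTmul i (s * t) x - barTmul i s (barC K n N i (barTmul i t x)) :=
  rfl

theorem barC_zero_barTmul_one (x : N) : barC K n N 0 (barTmul (N := N) 0 1 x) = x :=
  (barC_zero_barTmul 1 x).trans (one_smul (PS K n) x)

theorem barC_succ_barTmul_one (i : ℕ) (x : barD K n N (i + 1)) :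
    barC K n N (i + 1) (barTmul (i + 1) 1 x) = x - barTmul i 1 (barC K n N i x) := by
  suffices h : barC K n N (i + 1) ∘ₗ barTmul (i + 1) 1 =
      LinearMap.id - barTmul i 1 ∘ₗ barC K n N i from LinearMap.congr_fun h x
  refine barD_hom_ext fun s y => ?_
  simp only [LinearMap.comp_apply, LinearMap.sub_apply, LinearMap.id_apply, barC_succ_barTmul,
    one_mul]

theorem barB_tmul_barTmul (i : ℕ) (m : M) (s : PS K n) (x : barD K n N i) :
    barB K n N M i (m ⊗ₜ[K] barTmul i s x) =
      (s • m) ⊗ₜ[K] x - m ⊗ₜ[K] barC K n N i (barTmul i s x) :=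
  rfl

theorem barC_naturality (φ : PS K n →ₐ[K] PS K n) {β : N →ₗ[K] N'}
    (hβ : ∀ (s : PS K n) x, β (s • x) = φ s • β x) (i : ℕ) :
    barMap φ.toLinearMap β i ∘ₗ barC K n N i =
      barC K n N' i ∘ₗ barMap φ.toLinearMap β (i + 1) := by
  induction i with
  | zero => exact barD_hom_ext hβ
  | succ i ih =>
    refine barD_hom_ext fun s x => ?_
    suffices h : (barMap φ.toLinearMap β (i + 1) ∘ₗ barC K n N (i + 1)) ∘ₗ barTmul (i + 1) s =
        (barC K n N' (i + 1) ∘ₗ barMap φ.toLinearMap β (i + 2)) ∘ₗ barTmul (i + 1) s from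
      LinearMap.congr_fun h x
    refine barD_hom_ext fun t y => ?_
    have hi : barMap φ.toLinearMap β i (barC K n N i (barTmul i t y)) =
        barC K n N' i (barTmul i (φ t) (barMap φ.toLinearMap β i y)) := LinearMap.congr_fun ih _
    simp only [LinearMap.comp_apply, barC_succ_barTmul, barMap_barTmul, map_sub, hi,
      AlgHom.toLinearMap_apply, map_mul]

theorem barB_naturality (φ : PS K n →ₐ[K] PS K n) {α : M →ₗ[K] M'} {β : N →ₗ[K] N'}
    (hα : ∀ (s : PS K n) x, α (s • x) = φ s • α x)
    (hβ : ∀ (s : PS K n) x, β (s • x) = φ s • β x) (i : ℕ) :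
    TensorProduct.map α (barMap φ.toLinearMap β i) ∘ₗ barB K n N M i =
      barB K n N' M' i ∘ₗ TensorProduct.map α (barMap φ.toLinearMap β (i + 1)) := by
  refine TensorProduct.ext (LinearMap.ext fun m => barD_hom_ext fun s x => ?_)
  have hi : barMap φ.toLinearMap β i (barC K n N i (barTmul i s x)) =
      barC K n N' i (barTmul i (φ s) (barMap φ.toLinearMap β i x)) :=
    LinearMap.congr_fun (barC_naturality φ hβ i) _
  simp only [LinearMap.compr₂ₛₗ_apply, TensorProduct.mk_apply, LinearMap.comp_apply,
    barB_tmul_barTmul, TensorProduct.map_tmul, map_sub, hi, barMap_barTmul,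
    AlgHom.toLinearMap_apply, hα]

variable (n) in
/-- A grading of an `S`-module `N` is compatible with the action of `S` if
`S_p N_q ⊆ N_{p + q}`. -/
def IsGradedAction (GN : ℤ → Submodule K N) : Prop :=
  ∀ ⦃p q⦄, ∀ s ∈ polyGrade K n p, ∀ x ∈ GN q, s • x ∈ GN (p + q)

theorem map_barC_barDGrade_le {GN : ℤ → Submodule K N} (hN : IsGradedAction n GN) (i : ℕ)
    (d : ℤ) :
    (barDGrade K n N GN (i + 1) d).map (barC K n N i) ≤ barDGrade K n N GN i d := by
  rw [Submodule.map_le_iff_le_comap]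
  induction i generalizing d with
  | zero =>
    refine barDGrade_succ_le fun p q hpq s hs x hx => ?_
    obtain rfl := hpq
    exact hN s hs x hx
  | succ i ih =>
    refine barDGrade_succ_le fun p q hpq s hs x hx => ?_
    suffices h : barDGrade K n N GN (i + 1) q ≤
        ((barDGrade K n N GN (i + 1) d).comap (barC K n N (i + 1))).comap (barTmul (i + 1) s) from
      h hx
    refine barDGrade_succ_le fun p' q' hpq' t ht y hy => ?_
    rw [Submodule.mem_comap, Submodule.mem_comap, barC_succ_barTmul]
    exact sub_mem (barTmul_mem_barDGrade (by omega) (mul_mem_polyGrade hs ht) hy)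
      (barTmul_mem_barDGrade hpq hs (ih q (barTmul_mem_barDGrade hpq' ht hy)))

theorem map_barB_barStrand_le {GM : ℤ → Submodule K M} {GN : ℤ → Submodule K N}
    (hM : IsGradedAction n GM) (hN : IsGradedAction n GN) (i : ℕ) (d : ℤ) :
    (barStrand n GM GN (i + 1) d).map (barB K n N M i) ≤
      barStrand n GM GN i d := by
  rw [Submodule.map_le_iff_le_comap]
  refine tensorGrade_le fun p q hpq m hm x hx => ?_
  suffices h : barDGrade K n N GN (i + 1) q ≤
      ((barStrand n GM GN i d).comap (barB K n N M i)).comap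
        (TensorProduct.mk K M (barD K n N (i + 1)) m) from h hx
  refine barDGrade_succ_le fun p' q' hpq' s hs y hy => ?_
  rw [Submodule.mem_comap, Submodule.mem_comap, TensorProduct.mk_apply, barB_tmul_barTmul]
  refine sub_mem (tmul_mem_tensorGrade (by omega) (hM s hs m hm) hy)
    (tmul_mem_tensorGrade hpq hm (map_barC_barDGrade_le hN i q (Submodule.mem_map_of_mem ?_)))
  exact barTmul_mem_barDGrade hpq' hs hy

theorem barC_barTmul_barHomotopy (i : ℕ) {s : PS K n} (hs : constPart s = 0) (x : barD K n N i) :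
    barC K n N (i + 1) (barTmul (i + 1) s (barHomotopy i x)) -
      barHomotopy i (barC K n N i (barTmul i s x)) = barTmul i s (barDegenerate i x) := by
  induction i generalizing s with
  | zero => simp only [barHomotopy, barDegenerate, LinearMap.zero_apply, map_zero, sub_self]
  | succ i ih =>
    suffices h : barC K n N (i + 2) ∘ₗ barTmul (i + 2) s ∘ₗ barHomotopy (i + 1) -
        barHomotopy (i + 1) ∘ₗ barC K n N (i + 1) ∘ₗ barTmul (i + 1) s =
        barTmul (i + 1) s ∘ₗ barDegenerate (i + 1) from LinearMap.congr_fun h x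
    refine barD_hom_ext_constPart (fun y => ?_) (fun t ht y => ?_)
    · simp only [LinearMap.sub_apply, LinearMap.comp_apply, barHomotopy_barTmul_one,
        barDegenerate_barTmul_one, barC_succ_barTmul, mul_one, map_sub,
        barHomotopy_barTmul_of_constPart i hs]
      cases i with
      | zero =>
        have hy : barC K n N 0 (barTmul 0 1 y) = y := barC_zero_barTmul_one (N := N) y
        simp only [hy, barHomotopy, LinearMap.zero_apply, map_zero, sub_self, sub_zero, neg_zero]
      | succ i =>
        simp only [barC_succ_barTmul_one, map_sub, barHomotopy_barTmul_one]
        abel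
    · have hst : constPart (s * t) = 0 := by rw [constPart_mul, hs, zero_mul]
      simp only [LinearMap.sub_apply, LinearMap.comp_apply, barHomotopy_barTmul_of_constPart i ht,
        barDegenerate_barTmul_of_constPart i ht, barC_succ_barTmul, map_sub, map_neg,
        barHomotopy_barTmul_of_constPart i hst, barHomotopy_barTmul_of_constPart i hs, ← ih ht y]
      abel

theorem barB_barHomotopy (i : ℕ) :
    barB K n N M (i + 1) ∘ₗ TensorProduct.map LinearMap.id (barHomotopy (i + 1)) +
      TensorProduct.map LinearMap.id (barHomotopy i) ∘ₗ barB K n N M i =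
      TensorProduct.map LinearMap.id (barDegenerate (i + 1)) := by
  refine TensorProduct.ext (LinearMap.ext fun m =>
    barD_hom_ext_constPart (fun x => ?_) (fun s hs x => ?_))
  · simp only [LinearMap.compr₂ₛₗ_apply, TensorProduct.mk_apply, LinearMap.add_apply,
      LinearMap.comp_apply, TensorProduct.map_tmul, barB_tmul_barTmul, LinearMap.id_apply,
      barHomotopy_barTmul_one, barDegenerate_barTmul_one, one_smul, map_sub,
      barC_succ_barTmul_one]
    cases i with
    | zero =>
      have hx : barC K n N 0 (barTmul 0 1 x) = x := barC_zero_barTmul_one (N := N) x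
      simp only [hx, barHomotopy, LinearMap.zero_apply, TensorProduct.tmul_zero, sub_self,
        sub_zero, add_zero]
    | succ i =>
      simp only [barC_succ_barTmul_one, map_sub, barHomotopy_barTmul_one, TensorProduct.tmul_sub]
      abel
  · simp only [LinearMap.compr₂ₛₗ_apply, TensorProduct.mk_apply, LinearMap.add_apply,
      LinearMap.comp_apply, TensorProduct.map_tmul, barB_tmul_barTmul, LinearMap.id_apply,
      barHomotopy_barTmul_of_constPart i hs, barDegenerate_barTmul_of_constPart i hs, map_sub,
      ← barC_barTmul_barHomotopy i hs x, TensorProduct.tmul_sub, TensorProduct.tmul_neg, map_neg]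
    abel

theorem torStrandDim_zero {GM : ℤ → Submodule K M} {GN : ℤ → Submodule K N}
    (hM : IsLocallyFiniteGrading GM) (hN : IsLocallyFiniteGrading GN)
    (aM : IsGradedAction n GM) (aN : IsGradedAction n GN) (j : ℤ) :
    torStrandDim K n N M GM GN 0 j =
      Module.finrank K (barStrand n GM GN 0 j) -
        Module.finrank K
          ((barStrand n GM GN 1 j).map (barB K n N M 0)) := by
  rw [torStrandDim, (hM.tensorGrade (hN.barDGrade 1)).range_inf_eq_map
    (hM.tensorGrade (hN.barDGrade 0)) _ (map_barB_barStrand_le aM aN 0)]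

theorem torStrandDim_succ {GM : ℤ → Submodule K M} {GN : ℤ → Submodule K N}
    (hM : IsLocallyFiniteGrading GM) (hN : IsLocallyFiniteGrading GN)
    (aM : IsGradedAction n GM) (aN : IsGradedAction n GN) (i : ℕ) (j : ℤ) :
    torStrandDim K n N M GM GN (i + 1) j =
      Module.finrank K (barStrand n GM GN (i + 1) j) -
        Module.finrank K
          ((barStrand n GM GN (i + 1) j).map (barB K n N M i)) -
        Module.finrank K
          ((barStrand n GM GN (i + 2) j).map (barB K n N M (i + 1))) := by
  have hstrand := hM.tensorGrade (hN.barDGrade (n := n) (i + 1))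
  have := hstrand.finiteDimensional j
  rw [torStrandDim, (hM.tensorGrade (hN.barDGrade (i + 2))).range_inf_eq_map hstrand _
    (map_barB_barStrand_le aM aN (i + 1)), ← finrank_ker_inf_add_finrank_map (barB K n N M i)
    (barStrand n GM GN (i + 1) j), Nat.add_sub_cancel]

theorem torStrandDim_succ_eq_zero {GM : ℤ → Submodule K M} {GN : ℤ → Submodule K N}
    (hM : IsLocallyFiniteGrading GM) (hN : IsLocallyFiniteGrading GN) {i : ℕ} {j : ℤ}
    (hij : j < i + 1) : torStrandDim K n N M GM GN (i + 1) j = 0 := by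
  set strand := barStrand n GM GN (i + 1) j
  have : FiniteDimensional K strand :=
    (hM.tensorGrade (hN.barDGrade (n := n) (i + 1))).finiteDimensional j
  have hdeg : strand ≤ LinearMap.eqLocus
      (TensorProduct.map LinearMap.id (barDegenerate (i + 1))) LinearMap.id := by
    refine tensorGrade_le_of_nonneg hM.eq_bot_of_neg (hN.barDGrade (i + 1)).eq_bot_of_neg
      fun p q hp _ hpq m _ x hx => ?_
    have hxq : barDegenerate (i + 1) x = x :=
      barDGrade_le_eqLocus_barDegenerate hN.eq_bot_of_neg (i + 1) (by push_cast; omega) hx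
    rw [LinearMap.mem_eqLocus, TensorProduct.map_tmul, hxq, LinearMap.id_apply, LinearMap.id_apply]
  have hexact : LinearMap.ker (barB K n N M i) ⊓ strand ≤
      LinearMap.range (barB K n N M (i + 1)) ⊓ strand := by
    refine le_inf (fun z hz => ?_) inf_le_right
    have hzd : TensorProduct.map LinearMap.id (barDegenerate (i + 1)) z = z := hdeg hz.2
    have hhom := LinearMap.congr_fun (barB_barHomotopy (N := N) (M := M) i) z
    rw [hzd, LinearMap.add_apply, LinearMap.comp_apply, LinearMap.comp_apply,
      LinearMap.mem_ker.1 hz.1, map_zero, add_zero] at hhom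
    exact ⟨_, hhom⟩
  have : FiniteDimensional K ↥(LinearMap.range (barB K n N M (i + 1)) ⊓ strand) :=
    Submodule.finiteDimensional_of_le inf_le_right
  exact Nat.sub_eq_zero_of_le (Submodule.finrank_mono hexact)

end BarDifferential

/-! ### Tor of an ideal and a quotient ring -/

section TorIdealQuotient

variable {K n}

theorem isGradedAction_polyGrade : IsGradedAction n (polyGrade K n) :=
  fun _ _ _ hs _ hx => mul_mem_polyGrade hs hx

theorem isGradedAction_idealGrade (I : Ideal (PS K n)) : IsGradedAction n (idealGrade K n I) :=
  fun _ _ _ hs _ hx => mul_mem_polyGrade hs hx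

theorem isGradedAction_quotGrade (J : Ideal (PS K n)) : IsGradedAction n (quotGrade K n J) := by
  rintro p q s hs _ ⟨x, hx, rfl⟩
  exact ⟨s * x, mul_mem_polyGrade hs hx, rfl⟩

/-- The degree `j` part of the preimage, under `I ⊗ S^{⊗ i} ⊗ S → I ⊗ S^{⊗ i} ⊗ S/J`, of the
image of the bar differential `b_i` of `I` and `S/J`. It is encoded as a subspace of
`S ⊗ S^{⊗ i} ⊗ S`, which does not depend on `I` and `J`. -/
def boundaryStrand (I J : Ideal (PS K n)) (i : ℕ) (j : ℤ) :
    Submodule K (PS K n ⊗[K] barD K n (PS K n) i) :=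
  (barStrand n (gradedPart I) (polyGrade K n) (i + 1) j).map (barB K n (PS K n) (PS K n) i) ⊔
    barStrand n (gradedPart I) (gradedPart J) i j

theorem isLocallyFiniteGrading_barDGrade_polyGrade (i : ℕ) :
    IsLocallyFiniteGrading (barDGrade K n (PS K n) (polyGrade K n) i) :=
  isLocallyFiniteGrading_polyGrade.barDGrade i

theorem finiteDimensional_barStrand_gradedPart (I J : Ideal (PS K n)) (i : ℕ) (j : ℤ) :
    FiniteDimensional K (barStrand n (gradedPart I) (gradedPart J) i j) := by
  have : FiniteDimensional K (barStrand n (polyGrade K n) (polyGrade K n) i j) :=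
    (isLocallyFiniteGrading_polyGrade.tensorGrade
      (isLocallyFiniteGrading_barDGrade_polyGrade i)).finiteDimensional j
  exact Submodule.finiteDimensional_of_le
    (tensorGrade_mono (gradedPart_le_polyGrade I) (barDGrade_mono (gradedPart_le_polyGrade J) i))

theorem finiteDimensional_boundaryStrand (I J : Ideal (PS K n)) (i : ℕ) (j : ℤ) :
    FiniteDimensional K (boundaryStrand I J i j) := by
  have := finiteDimensional_barStrand_gradedPart I J i j
  have := finiteDimensional_barStrand_gradedPart I ⊤ (i + 1) j
  rw [gradedPart_top] at this
  exact Submodule.finiteDimensional_sup _ _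

theorem finrank_barStrand_le {I I' J J' : Ideal (PS K n)}
    (hI : ∀ p, Module.finrank K (gradedPart I p) = Module.finrank K (gradedPart I' p))
    (hJ : ∀ p, Module.finrank K (gradedPart J p) = Module.finrank K (gradedPart J' p))
    (i : ℕ) (j : ℤ) :
    Module.finrank K (barStrand n (gradedPart I') (gradedPart J') i j) ≤
      Module.finrank K (barStrand n (gradedPart I) (gradedPart J) i j) := by
  obtain ⟨F, hF⟩ := exists_map_gradedPart_eq hI
  obtain ⟨G, hG⟩ := exists_map_gradedPart_eq hJ
  have := finiteDimensional_barStrand_gradedPart I J i j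
  have hmap : (barStrand n (gradedPart I) (gradedPart J) i j).map
      (TensorProduct.map F (barMap LinearMap.id G i)) =
      barStrand n (gradedPart I') (gradedPart J') i j := by
    rw [map_tensorGrade]
    simp only [map_barDGrade fun p => Submodule.map_id (polyGrade K n p), hF, hG]
  exact hmap ▸ Submodule.finrank_map_le _ _

theorem finrank_barStrand_congr {I I' J J' : Ideal (PS K n)}
    (hI : ∀ p, Module.finrank K (gradedPart I p) = Module.finrank K (gradedPart I' p))
    (hJ : ∀ p, Module.finrank K (gradedPart J p) = Module.finrank K (gradedPart J' p))
    (i : ℕ) (j : ℤ) :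
    Module.finrank K (barStrand n (gradedPart I) (gradedPart J) i j) =
      Module.finrank K (barStrand n (gradedPart I') (gradedPart J') i j) :=
  le_antisymm (finrank_barStrand_le (fun p => (hI p).symm) (fun p => (hJ p).symm) i j)
    (finrank_barStrand_le hI hJ i j)

/-- The map `M ⊗ S^{⊗ i} ⊗ S → M ⊗ S^{⊗ i} ⊗ S/J` induced by the projection `S → S/J`. -/
def barQuotMap (M : Type) [AddCommGroup M] [Module K M] (J : Ideal (PS K n)) (i : ℕ) :
    M ⊗[K] barD K n (PS K n) i →ₗ[K] M ⊗[K] barD K n (PS K n ⧸ J) i :=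
  TensorProduct.map LinearMap.id (barMap LinearMap.id (Ideal.Quotient.mkₐ K J).toLinearMap i)

theorem map_barQuotMap {M : Type} [AddCommGroup M] [Module K M] (GM : ℤ → Submodule K M)
    (GN : ℤ → Submodule K (PS K n)) (J : Ideal (PS K n)) (i : ℕ) (j : ℤ) :
    (barStrand n GM GN i j).map (barQuotMap M J i) =
      barStrand n GM (fun p => (GN p).map (Ideal.Quotient.mkₐ K J).toLinearMap) i j := by
  rw [barQuotMap, map_tensorGrade]
  simp only [Submodule.map_id, map_barDGrade fun p => Submodule.map_id (polyGrade K n p)]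

theorem barStrand_gradedPart_le_ker_barQuotMap {M : Type} [AddCommGroup M] [Module K M]
    (GM : ℤ → Submodule K M) (J : Ideal (PS K n)) (i : ℕ) (j : ℤ) :
    barStrand n GM (gradedPart J) i j ≤ LinearMap.ker (barQuotMap M J i) := by
  have hJ : (fun p => (gradedPart J p).map (Ideal.Quotient.mkₐ K J).toLinearMap) = fun _ => ⊥ :=
    funext fun p => LinearMap.le_ker_iff_map.1 fun _ hx => Ideal.Quotient.eq_zero_iff_mem.2 hx.2
  rw [LinearMap.le_ker_iff_map, map_barQuotMap, hJ, eq_bot_iff]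
  refine tensorGrade_le fun p q _ m _ x hx => ?_
  rw [barDGrade_bot, Submodule.mem_bot] at hx
  rw [hx, TensorProduct.tmul_zero]
  exact zero_mem _

theorem ker_barQuotMap_inf_barStrand_le {M : Type} [AddCommGroup M] [Module K M]
    (GM : ℤ → Submodule K M) {J : Ideal (PS K n)} (hJ : IsHomog K n J) (i : ℕ) (j : ℤ) :
    LinearMap.ker (barQuotMap M J i) ⊓ barStrand n GM (polyGrade K n) i j ≤
      barStrand n GM (gradedPart J) i j := by
  rintro z ⟨hz, hzS⟩
  obtain ⟨F, hF, hFJ⟩ := exists_gradedRetraction hJ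
  set q := (Ideal.Quotient.mkₐ K J).toLinearMap
  have hker : LinearMap.ker q ≤ LinearMap.ker (LinearMap.id - F) := fun x hx => by
    rw [LinearMap.mem_ker, LinearMap.sub_apply, LinearMap.id_apply,
      hFJ x (Ideal.Quotient.eq_zero_iff_mem.1 hx), sub_self]
  obtain ⟨σ, hσ⟩ := q.exists_rightInverse_of_surjective
    (LinearMap.range_eq_top.2 (Ideal.Quotient.mkₐ_surjective K J))
  have hsplit : F + ((LinearMap.id - F) ∘ₗ σ) ∘ₗ q = LinearMap.id := by
    refine LinearMap.ext fun x => ?_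
    have hx : σ (q x) - x ∈ LinearMap.ker q := by
      rw [LinearMap.mem_ker, map_sub, sub_eq_zero]
      exact LinearMap.congr_fun hσ (q x)
    have hFx := hker hx
    rw [LinearMap.mem_ker, map_sub, sub_eq_zero] at hFx
    rw [LinearMap.add_apply, LinearMap.comp_apply, LinearMap.comp_apply, hFx, LinearMap.sub_apply,
      add_sub_cancel]
  have hretract : TensorProduct.map LinearMap.id (barMap LinearMap.id F i) z = z := by
    have hid : TensorProduct.map (LinearMap.id : M →ₗ[K] M) (barMap LinearMap.id F i) +
        TensorProduct.map LinearMap.id (barMap LinearMap.id ((LinearMap.id - F) ∘ₗ σ) i) ∘ₗ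
          barQuotMap M J i = LinearMap.id := by
      rw [barQuotMap, ← TensorProduct.map_comp, barMap_comp, LinearMap.id_comp, LinearMap.id_comp,
        ← TensorProduct.map_add_right, ← barMap_add, hsplit, barMap_id, TensorProduct.map_id]
    have hzid := LinearMap.congr_fun hid z
    rwa [LinearMap.add_apply, LinearMap.comp_apply, LinearMap.mem_ker.1 hz, map_zero,
      add_zero] at hzid
  have hmem := Submodule.mem_map_of_mem
    (f := TensorProduct.map LinearMap.id (barMap LinearMap.id F i)) hzS
  rw [hretract, map_tensorGrade] at hmem
  refine tensorGrade_mono (fun p => (Submodule.map_id _).le) (fun p => ?_) hmem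
  rw [map_barDGrade fun p => Submodule.map_id (polyGrade K n p)]
  exact barDGrade_mono hF i p

theorem ker_barQuotMap_inf_barStrand {M : Type} [AddCommGroup M] [Module K M]
    (GM : ℤ → Submodule K M) {J : Ideal (PS K n)} (hJ : IsHomog K n J) (i : ℕ) (j : ℤ) :
    LinearMap.ker (barQuotMap M J i) ⊓ barStrand n GM (polyGrade K n) i j =
      barStrand n GM (gradedPart J) i j :=
  le_antisymm (ker_barQuotMap_inf_barStrand_le GM hJ i j)
    (le_inf (barStrand_gradedPart_le_ker_barQuotMap GM J i j)
      (tensorGrade_mono (fun _ => le_rfl) (barDGrade_mono (gradedPart_le_polyGrade J) i)))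

theorem finrank_map_barQuotMap_add {M : Type} [AddCommGroup M] [Module K M]
    {GM : ℤ → Submodule K M} (hM : IsLocallyFiniteGrading GM) {J : Ideal (PS K n)}
    (hJ : IsHomog K n J) {i : ℕ} {j : ℤ} {U : Submodule K (M ⊗[K] barD K n (PS K n) i)}
    (hU : barStrand n GM (gradedPart J) i j ≤ U) (hU' : U ≤ barStrand n GM (polyGrade K n) i j) :
    Module.finrank K (U.map (barQuotMap M J i)) +
      Module.finrank K (barStrand n GM (gradedPart J) i j) = Module.finrank K U :=
  finrank_map_add_finrank
    ((hM.tensorGrade (isLocallyFiniteGrading_barDGrade_polyGrade i)).finiteDimensional j)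
    (ker_barQuotMap_inf_barStrand GM hJ i j) hU hU'

theorem barQuotMap_comp_barB (I J : Ideal (PS K n)) (i : ℕ) :
    barQuotMap I J i ∘ₗ barB K n (PS K n) I i =
      barB K n (PS K n ⧸ J) I i ∘ₗ barQuotMap I J (i + 1) :=
  barB_naturality (AlgHom.id K (PS K n)) (α := LinearMap.id) (fun _ _ => rfl)
    (fun s x => map_mul (Ideal.Quotient.mkₐ K J) s x) i

/-- The inclusion `I ⊗ S^{⊗ i} ⊗ S → S ⊗ S^{⊗ i} ⊗ S`. -/
def barIncl (I : Ideal (PS K n)) (i : ℕ) :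
    I ⊗[K] barD K n (PS K n) i →ₗ[K] PS K n ⊗[K] barD K n (PS K n) i :=
  (I.subtype.restrictScalars K).rTensor (barD K n (PS K n) i)

theorem finrank_map_barIncl (I : Ideal (PS K n)) (i : ℕ)
    (U : Submodule K (I ⊗[K] barD K n (PS K n) i)) :
    Module.finrank K (U.map (barIncl I i)) = Module.finrank K U :=
  (Submodule.equivMapOfInjective (barIncl I i)
    (Module.Flat.rTensor_preserves_injective_linearMap _ Subtype.val_injective) U).finrank_eq.symm

theorem map_barIncl (I : Ideal (PS K n)) (GN : ℤ → Submodule K (PS K n)) (i : ℕ) (j : ℤ) :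
    (barStrand n (idealGrade K n I) GN i j).map (barIncl I i) =
      barStrand n (gradedPart I) GN i j := by
  rw [barIncl, LinearMap.rTensor, map_tensorGrade]
  simp only [map_subtype_idealGrade, Submodule.map_id]

theorem barIncl_comp_barB (I : Ideal (PS K n)) (i : ℕ) :
    barIncl I i ∘ₗ barB K n (PS K n) I i =
      barB K n (PS K n) (PS K n) i ∘ₗ barIncl I (i + 1) := by
  have hnat := barB_naturality (AlgHom.id K (PS K n)) (α := I.subtype.restrictScalars K)
    (β := LinearMap.id (M := PS K n)) (fun _ _ => rfl) (fun _ _ => rfl) i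
  rwa [AlgHom.toLinearMap_id, barMap_id, barMap_id] at hnat

theorem finrank_barStrand_add {I J : Ideal (PS K n)} (hI : IsHomog K n I) (hJ : IsHomog K n J)
    (i : ℕ) (j : ℤ) :
    Module.finrank K (barStrand n (idealGrade K n I) (quotGrade K n J) i j) +
        Module.finrank K (barStrand n (gradedPart I) (gradedPart J) i j) =
      Module.finrank K (barStrand n (gradedPart I) (polyGrade K n) i j) := by
  have h := finrank_map_barQuotMap_add (isLocallyFiniteGrading_idealGrade hI) hJ
    (tensorGrade_mono (fun _ => le_rfl) (barDGrade_mono (gradedPart_le_polyGrade J) i)) le_rfl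
    (j := j)
  rwa [map_barQuotMap, ← finrank_map_barIncl, ← finrank_map_barIncl _ _ (barStrand ..),
    map_barIncl, map_barIncl] at h

theorem finrank_map_barB_add {I J : Ideal (PS K n)} (hI : IsHomog K n I) (hJ : IsHomog K n J)
    (i : ℕ) (j : ℤ) :
    Module.finrank K ((barStrand n (idealGrade K n I) (quotGrade K n J) (i + 1) j).map
          (barB K n (PS K n ⧸ J) I i)) +
        Module.finrank K (barStrand n (gradedPart I) (gradedPart J) i j) =
      Module.finrank K (boundaryStrand I J i j) := by
  have h := finrank_map_barQuotMap_add (isLocallyFiniteGrading_idealGrade hI) hJ le_sup_right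
    (sup_le (map_barB_barStrand_le (isGradedAction_idealGrade I) isGradedAction_polyGrade i j)
      (tensorGrade_mono (fun _ => le_rfl) (barDGrade_mono (gradedPart_le_polyGrade J) i)))
  rwa [Submodule.map_sup, LinearMap.le_ker_iff_map.1 (barStrand_gradedPart_le_ker_barQuotMap ..),
    sup_bot_eq, ← Submodule.map_comp, barQuotMap_comp_barB, Submodule.map_comp, map_barQuotMap,
    ← finrank_map_barIncl, ← finrank_map_barIncl _ _ (_ ⊔ _), map_barIncl, Submodule.map_sup,
    map_barIncl, ← Submodule.map_comp, barIncl_comp_barB, Submodule.map_comp, map_barIncl] at h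

theorem torIQ_le_torIQ_of_finrank_boundaryStrand_le {I J I' J' : Ideal (PS K n)}
    (hI : IsHomog K n I) (hJ : IsHomog K n J) (hI' : IsHomog K n I') (hJ' : IsHomog K n J')
    (dI : ∀ p, Module.finrank K (gradedPart I p) = Module.finrank K (gradedPart I' p))
    (dJ : ∀ p, Module.finrank K (gradedPart J p) = Module.finrank K (gradedPart J' p)) {j : ℤ}
    (h : ∀ i < j.toNat + 1, Module.finrank K (boundaryStrand I' J' i j) ≤
      Module.finrank K (boundaryStrand I J i j)) (i : ℕ) :
    torIQ K n I J i j ≤ torIQ K n I' J' i j := by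
  have gI := isLocallyFiniteGrading_idealGrade hI
  have gI' := isLocallyFiniteGrading_idealGrade hI'
  have gJ := isLocallyFiniteGrading_quotGrade hJ
  have gJ' := isLocallyFiniteGrading_quotGrade hJ'
  have aI := isGradedAction_idealGrade I
  have aI' := isGradedAction_idealGrade I'
  have aJ := isGradedAction_quotGrade J
  have aJ' := isGradedAction_quotGrade J'
  have hX (i : ℕ) : Module.finrank K (barStrand n (gradedPart I) (polyGrade K n) i j) =
      Module.finrank K (barStrand n (gradedPart I') (polyGrade K n) i j) := by
    rw [← gradedPart_top]
    exact finrank_barStrand_congr dI (fun _ => rfl) i j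
  have hY (i : ℕ) := finrank_barStrand_congr dI dJ i j
  have hC (i : ℕ) := Nat.eq_sub_of_add_eq (finrank_barStrand_add hI hJ i j)
  have hC' (i : ℕ) := Nat.eq_sub_of_add_eq (finrank_barStrand_add hI' hJ' i j)
  have hB (i : ℕ) := Nat.eq_sub_of_add_eq (finrank_map_barB_add hI hJ i j)
  have hB' (i : ℕ) := Nat.eq_sub_of_add_eq (finrank_map_barB_add hI' hJ' i j)
  unfold torIQ
  rcases i with _ | i
  · rw [torStrandDim_zero gI gJ aI aJ, torStrandDim_zero gI' gJ' aI' aJ', hC, hC', hX, hY, hB,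
      hB', hY]
    have h_zero := h 0 (by omega)
    omega
  rcases lt_or_ge j (i + 1) with hij | hij
  · rw [torStrandDim_succ_eq_zero gI gJ hij]
    exact Nat.zero_le _
  · rw [torStrandDim_succ gI gJ aI aJ, torStrandDim_succ gI' gJ' aI' aJ', hC, hC', hX, hY, hB, hB,
      hB', hB', hY, hY]
    have h_i := h i (by omega)
    have h_succ := h (i + 1) (by omega)
    omega

end TorIdealQuotient

/-! ### Changes of coordinates -/

section Coordinates

variable {K n}

/-- The substitution `x_i ↦ ∑_j A_{ji} x_j`, for a matrix `A` that need not be invertible. This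
extends `coordChange` to a family over the affine space of matrices. -/
def linearSubst (A : Matrix (Fin n) (Fin n) K) : PS K n →ₐ[K] PS K n :=
  aeval fun i => ∑ j, A j i • X j

theorem coordChange_eq_linearSubst (g : GL (Fin n) K) :
    coordChange K n g = linearSubst (g : Matrix (Fin n) (Fin n) K) :=
  rfl

theorem coordChange_mul (g h : GL (Fin n) K) :
    coordChange K n (g * h) = (coordChange K n g).comp (coordChange K n h) := by
  refine algHom_ext fun i => ?_
  simp only [coordChange, AlgHom.comp_apply, aeval_X, map_sum, map_smul, Units.val_mul,
    Matrix.mul_apply, Finset.sum_smul, Finset.smul_sum, smul_smul]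
  rw [Finset.sum_comm]
  simp only [mul_comm]

theorem coordChange_one : coordChange K n 1 = AlgHom.id K (PS K n) := by
  refine algHom_ext fun i => ?_
  simp only [coordChange, aeval_X, Units.val_one, Matrix.one_apply, ite_smul, one_smul, zero_smul,
    Finset.sum_ite_eq', Finset.mem_univ, if_true, AlgHom.id_apply]

theorem coordChange_coordChange_inv (g : GL (Fin n) K) (x : PS K n) :
    coordChange K n g (coordChange K n g⁻¹ x) = x := by
  rw [← AlgHom.comp_apply, ← coordChange_mul, mul_inv_cancel, coordChange_one, AlgHom.id_apply]

theorem map_coordChange_map (g h : GL (Fin n) K) (J : Ideal (PS K n)) :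
    (J.map (coordChange K n h)).map (coordChange K n g) = J.map (coordChange K n (g * h)) := by
  rw [coordChange_mul, Ideal.map_mapₐ]

theorem map_coordChange_inv_map (g : GL (Fin n) K) (J : Ideal (PS K n)) :
    (J.map (coordChange K n g)).map (coordChange K n g⁻¹) = J := by
  rw [map_coordChange_map, inv_mul_cancel, coordChange_one]
  exact Ideal.map_id J

theorem linearSubst_mem_polyGrade (A : Matrix (Fin n) (Fin n) K) {p : ℤ} {x : PS K n}
    (hx : x ∈ polyGrade K n p) : linearSubst A x ∈ polyGrade K n p := by
  rcases lt_or_ge p 0 with hp | hp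
  · rw [polyGrade_eq_bot_of_neg p hp, Submodule.mem_bot] at hx
    rw [hx, map_zero]
    exact zero_mem _
  lift p to ℕ using hp
  rw [polyGrade_natCast] at *
  rw [← one_mul p]
  refine IsHomogeneous.aeval hx _ fun i => IsHomogeneous.sum _ _ _ fun j _ => ?_
  exact (homogeneousSubmodule (Fin n) K 1).smul_mem _ (isHomogeneous_X K j)

theorem linearSubst_mem_gradedPart (A : Matrix (Fin n) (Fin n) K) {J : Ideal (PS K n)} {p : ℤ}
    {x : PS K n} (hx : x ∈ gradedPart J p) :
    linearSubst A x ∈ gradedPart (J.map (linearSubst A)) p :=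
  ⟨linearSubst_mem_polyGrade A hx.1, Ideal.mem_map_of_mem _ hx.2⟩

theorem gradedPart_map_coordChange (g : GL (Fin n) K) (J : Ideal (PS K n)) (p : ℤ) :
    gradedPart (J.map (coordChange K n g)) p =
      (gradedPart J p).map (coordChange K n g).toLinearMap := by
  apply le_antisymm
  · intro x hx
    refine ⟨coordChange K n g⁻¹ x, ?_, coordChange_coordChange_inv g x⟩
    have hmem := linearSubst_mem_gradedPart (g⁻¹).val hx
    rwa [← coordChange_eq_linearSubst, map_coordChange_inv_map] at hmem
  · rintro _ ⟨x, hx, rfl⟩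
    exact linearSubst_mem_gradedPart _ hx

theorem map_coordChange_polyGrade (g : GL (Fin n) K) (p : ℤ) :
    (polyGrade K n p).map (coordChange K n g).toLinearMap = polyGrade K n p := by
  rw [← gradedPart_top, ← gradedPart_map_coordChange, Ideal.map_top]

theorem finrank_gradedPart_map_coordChange (g : GL (Fin n) K) (J : Ideal (PS K n)) (p : ℤ) :
    Module.finrank K (gradedPart (J.map (coordChange K n g)) p) =
      Module.finrank K (gradedPart J p) := by
  have hle (g : GL (Fin n) K) (J : Ideal (PS K n)) :
      Module.finrank K (gradedPart (J.map (coordChange K n g)) p) ≤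
        Module.finrank K (gradedPart J p) := by
    rw [gradedPart_map_coordChange]
    exact Submodule.finrank_map_le _ _
  refine (hle g J).antisymm ?_
  conv_lhs => rw [← map_coordChange_inv_map g J]
  exact hle _ _

theorem IsHomog.map_coordChange {J : Ideal (PS K n)} (hJ : IsHomog K n J) (g : GL (Fin n) K) :
    IsHomog K n (J.map (coordChange K n g)) := by
  intro f hf d
  have hsurj : Function.Surjective (coordChange K n g) :=
    fun x => ⟨_, coordChange_coordChange_inv g x⟩
  obtain ⟨x, hx, rfl⟩ := (Ideal.mem_map_iff_of_surjective _ hsurj).1 hf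
  rw [← sum_homogeneousComponent x, map_sum, map_sum]
  refine Submodule.sum_mem _ fun e _ => ?_
  have he : coordChange K n g (homogeneousComponent e x) ∈ homogeneousSubmodule (Fin n) K e := by
    rw [← polyGrade_natCast]
    refine linearSubst_mem_polyGrade _ ?_
    rw [polyGrade_natCast]
    exact homogeneousComponent_isHomogeneous e x
  rw [homogeneousComponent_of_mem he]
  split_ifs
  · exact Ideal.mem_map_of_mem _ (hJ x hx e)
  · exact zero_mem _

theorem finrank_boundaryStrand_map_coordChange_le (g : GL (Fin n) K) (I J : Ideal (PS K n)) (i : ℕ)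
    (j : ℤ) :
    Module.finrank K
        (boundaryStrand (I.map (coordChange K n g)) (J.map (coordChange K n g)) i j) ≤
      Module.finrank K (boundaryStrand I J i j) := by
  set φ := coordChange K n g
  have hnat := barB_naturality φ (α := φ.toLinearMap) (β := φ.toLinearMap) (map_mul φ) (map_mul φ) i
  have hmap : (boundaryStrand I J i j).map
      (TensorProduct.map φ.toLinearMap (barMap φ.toLinearMap φ.toLinearMap i)) =
      boundaryStrand (I.map φ) (J.map φ) i j := by
    rw [boundaryStrand, Submodule.map_sup, ← Submodule.map_comp, hnat, Submodule.map_comp,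
      map_tensorGrade, map_tensorGrade]
    simp only [map_barDGrade (map_coordChange_polyGrade g), map_coordChange_polyGrade,
      ← gradedPart_map_coordChange, φ]
    rfl
  have := finiteDimensional_boundaryStrand I J i j
  exact hmap ▸ Submodule.finrank_map_le _ _

theorem eventually_finrank_boundaryStrand_le {σ : Type*} {G : Set (σ → K)} {a₀ : σ → K} {j : ℤ}
    {I₀ J₀ : Ideal (PS K n)} {I J : (σ → K) → Ideal (PS K n)}
    (hI : ∀ p ≤ j, gradedPart I₀ p ≤ limitSubmodule G a₀ fun a => gradedPart (I a) p)
    (hJ : ∀ p ≤ j, gradedPart J₀ p ≤ limitSubmodule G a₀ fun a => gradedPart (J a) p) (N : ℕ) :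
    ∀ᶠ a in zariskiNhds a₀, ∀ i < N, a ∈ G →
      Module.finrank K (boundaryStrand I₀ J₀ i j) ≤
        Module.finrank K (boundaryStrand (I a) (J a) i j) := by
  simp only [← Finset.mem_range]
  rw [Filter.eventually_all_finset]
  intro i _
  have hneg (L : Ideal (PS K n)) (p : ℤ) (hp : p < 0) : gradedPart L p = ⊥ :=
    eq_bot_iff.2 ((gradedPart_le_polyGrade L p).trans (polyGrade_eq_bot_of_neg p hp).le)
  have := finiteDimensional_boundaryStrand I₀ J₀ i j
  refine eventually_finrank_le_of_le_limitSubmodule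
    (fun a _ => finiteDimensional_boundaryStrand (I a) (J a) i j) (sup_le_limitSubmodule ?_ ?_)
  · exact map_le_limitSubmodule _ (tensorGrade_le_limitSubmodule (hneg I₀)
      (barDGrade_eq_bot_of_neg polyGrade_eq_bot_of_neg _) hI fun _ _ => le_limitSubmodule_const _)
  · exact tensorGrade_le_limitSubmodule (hneg I₀) (barDGrade_eq_bot_of_neg (hneg J₀) i) hI
      fun p hp => barDGrade_le_limitSubmodule (hneg J₀) (fun q hq => hJ q (hq.trans hp)) i

theorem linearSubst_mem_polyFamily (x : PS K n) :
    (fun a : Fin n × Fin n → K => linearSubst (Matrix.of (Function.curry a)) x) ∈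
      polyFamily K (Fin n × Fin n) (PS K n) := by
  induction x using MvPolynomial.induction_on with
  | C c => simpa only [algHom_C] using const_mem_polyFamily _
  | add p q hp hq =>
    simp only [map_add]
    exact add_mem hp hq
  | mul_X p i hp =>
    have hX : (fun a : Fin n × Fin n → K => linearSubst (Matrix.of (Function.curry a)) (X i)) ∈
        polyFamily K (Fin n × Fin n) (PS K n) := by
      simp only [linearSubst, aeval_X]
      have hsum := sum_mem fun j (_ : j ∈ Finset.univ) =>
        eval_smul_mem_polyFamily (X (j, i) : MvPolynomial (Fin n × Fin n) K) (X j : PS K n)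
      rw [Finset.sum_fn] at hsum
      simp only [eval_X] at hsum
      exact hsum
    simp only [map_mul]
    exact map₂_mem_polyFamily (LinearMap.mul K (PS K n)) hp hX

theorem generally_finrank_boundaryStrand_le (I J : Ideal (PS K n)) (g₀ : GL (Fin n) K) (j : ℤ)
    (N : ℕ) : generally K n fun g => ∀ i < N,
      Module.finrank K (boundaryStrand I (J.map (coordChange K n g₀)) i j) ≤
        Module.finrank K (boundaryStrand I (J.map (coordChange K n g)) i j) := by
  have hlimit (p : ℤ) : gradedPart (J.map (coordChange K n g₀)) p ≤
      limitSubmodule Set.univ (fun q => (g₀ : Matrix (Fin n) (Fin n) K) q.1 q.2)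
        fun a => gradedPart (J.map (linearSubst (Matrix.of (Function.curry a)))) p := by
    rw [gradedPart_map_coordChange]
    rintro _ ⟨x, hx, rfl⟩
    exact mem_limitSubmodule_iff.2
      ⟨_, linearSubst_mem_polyFamily x, fun _ _ => linearSubst_mem_gradedPart _ hx, rfl⟩
  obtain ⟨F, hF₀, hF⟩ := eventually_zariskiNhds_iff.1 <| eventually_finrank_boundaryStrand_le
    (I := fun _ => I) (fun _ _ => le_limitSubmodule_const _) (fun p (_ : p ≤ j) => hlimit p) N
  exact ⟨F, fun h => hF₀ (by rw [h, map_zero]), fun g hg i hi => hF _ hg i hi (Set.mem_univ _)⟩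

end Coordinates

/-! ### Initial ideals as limits along one-parameter subgroups -/

section InitialIdeals

variable {K n}

/-- A strict order on exponent vectors that is total and compatible with addition and, in bounded
degree, is refined by the order of the values of some integral weight. These are the properties of
a monomial order that make initial ideals into limits of torus translates. -/
structure IsWeightOrder (r : (Fin n →₀ ℕ) → (Fin n →₀ ℕ) → Prop) : Prop where
  add : ∀ u v w, r u v → r (u + w) (v + w)
  total : ∀ u v, u = v ∨ r u v ∨ r v u
  weight : ∀ D : ℕ, ∃ w : Fin n → ℕ, ∀ u v, u.degree ≤ D → v.degree ≤ D → r u v →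
    Finsupp.weight w u < Finsupp.weight w v

theorem sum_pow_mul_lt_pow {D : ℕ} {u : Fin n → ℕ} (hu : ∀ k, u k ≤ D) :
    ∑ k : Fin n, (D + 1) ^ (k : ℕ) * u k < (D + 1) ^ n := by
  calc ∑ k : Fin n, (D + 1) ^ (k : ℕ) * u k
      ≤ ∑ k : Fin n, (D + 1) ^ (k : ℕ) * D := by gcongr with k; exact hu k
    _ = (∑ k ∈ Finset.range n, (D + 1) ^ k) * D := by
      rw [Finset.sum_mul, Fin.sum_univ_eq_sum_range fun k => (D + 1) ^ k * D]
    _ < (D + 1) ^ n := by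
      rw [← geom_sum_mul_add D n]
      exact Nat.lt_succ_self _

theorem sum_pow_mul_lt_sum_pow_mul {n D : ℕ} {u v : Fin n → ℕ} (hu : ∀ k, u k ≤ D) {i : Fin n}
    (hi : u i < v i) (heq : ∀ k, i < k → u k = v k) :
    ∑ k : Fin n, (D + 1) ^ (k : ℕ) * u k < ∑ k : Fin n, (D + 1) ^ (k : ℕ) * v k := by
  induction n with
  | zero => exact i.elim0
  | succ n ih =>
    rw [Fin.sum_univ_castSucc, Fin.sum_univ_castSucc]
    induction i using Fin.lastCases with
    | last =>
      refine (Nat.add_lt_add_right (sum_pow_mul_lt_pow fun k => hu k.castSucc) _).trans_le ?_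
      calc (D + 1) ^ n + (D + 1) ^ n * u (Fin.last n)
          = (D + 1) ^ n * (u (Fin.last n) + 1) := by ring
        _ ≤ (D + 1) ^ n * v (Fin.last n) := Nat.mul_le_mul_left _ hi
        _ ≤ _ := Nat.le_add_left _ _
    | cast i =>
      rw [heq _ (Fin.castSucc_lt_last i)]
      exact Nat.add_lt_add_right (ih (fun k => hu k.castSucc) hi
        fun k hk => heq _ (Fin.castSucc_lt_castSucc_iff.2 hk)) _

theorem isWeightOrder_lex {s : Fin n → Fin n → Prop} (e : Fin n ≃ Fin n)
    (hs : ∀ i k, s i k ↔ e k < e i) : IsWeightOrder (Finsupp.Lex s (· < ·)) where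
  add := by
    rintro u v w ⟨i, hagree, hlt⟩
    exact ⟨i, fun k hk => congrArg (· + w k) (hagree k hk), Nat.add_lt_add_right hlt _⟩
  total u v := by
    refine or_iff_not_imp_left.2 fun huv => ?_
    obtain ⟨k₀, hk₀⟩ := Finsupp.ne_iff.1 huv
    obtain ⟨i, hi, hmax⟩ := (Finset.univ.filter fun k => u k ≠ v k).exists_max_image e
      ⟨k₀, Finset.mem_filter.2 ⟨Finset.mem_univ _, hk₀⟩⟩
    have hagree (k : Fin n) (hk : s k i) : u k = v k := by
      by_contra hne
      exact ((hs k i).1 hk).not_ge (hmax k (Finset.mem_filter.2 ⟨Finset.mem_univ _, hne⟩))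
    exact (Finset.mem_filter.1 hi).2.lt_or_gt.imp (fun hlt => ⟨i, hagree, hlt⟩)
      fun hlt => ⟨i, fun k hk => (hagree k hk).symm, hlt⟩
  weight D := by
    refine ⟨fun k => (D + 1) ^ (e k : ℕ), ?_⟩
    rintro u v hu - ⟨i, hagree, hlt⟩
    have hweight (m : Fin n →₀ ℕ) : Finsupp.weight (fun k => (D + 1) ^ (e k : ℕ)) m =
        ∑ k : Fin n, (D + 1) ^ (k : ℕ) * m (e.symm k) := by
      rw [Finsupp.weight_eq_sum, ← Equiv.sum_comp e fun k => (D + 1) ^ (k : ℕ) * m (e.symm k)]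
      simp only [smul_eq_mul, mul_comm, Equiv.symm_apply_apply]
    rw [hweight, hweight]
    refine sum_pow_mul_lt_sum_pow_mul (fun k => (Finsupp.le_degree _ u).trans hu) (i := e i) ?_ ?_
    · rwa [Equiv.symm_apply_apply]
    · exact fun k hk => hagree _ ((hs _ _).2 (by rwa [Equiv.apply_symm_apply]))

theorem isWeightOrder_lexLt : IsWeightOrder (lexLt n) :=
  isWeightOrder_lex Fin.revPerm fun _ _ => Fin.rev_lt_rev.symm

theorem isWeightOrder_oplexLt : IsWeightOrder (oplexLt n) :=
  isWeightOrder_lex (Equiv.refl _) fun _ _ => Iff.rfl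

variable {r : (Fin n →₀ ℕ) → (Fin n →₀ ℕ) → Prop}

variable (r) in
/-- `m` is the exponent of the leading term of `f` with respect to the strict order `r`. -/
def IsLeadingExp (f : PS K n) (m : Fin n →₀ ℕ) : Prop :=
  m ∈ f.support ∧ ∀ u ∈ f.support, u = m ∨ r u m

theorem IsWeightOrder.exists_isLeadingExp (hr : IsWeightOrder r) {f : PS K n} (hf : f ≠ 0) :
    ∃ m, IsLeadingExp r f m := by
  obtain ⟨w, hw⟩ := hr.weight f.totalDegree
  obtain ⟨m, hm, hmax⟩ := f.support.exists_max_image (Finsupp.weight w) (support_nonempty.2 hf)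
  refine ⟨m, hm, fun u hu => (hr.total u m).imp_right fun h => h.resolve_right fun hmu => ?_⟩
  exact (hw m u (le_totalDegree hm) (le_totalDegree hu) hmu).not_ge (hmax u hu)

theorem IsLeadingExp.monomial_mul (hr : IsWeightOrder r) {f : PS K n} {m : Fin n →₀ ℕ}
    (h : IsLeadingExp r f m) (s : Fin n →₀ ℕ) :
    IsLeadingExp r (monomial s 1 * f) (s + m) := by
  refine ⟨?_, fun u hu => ?_⟩
  · rw [mem_support_iff, coeff_monomial_mul, one_mul]
    exact mem_support_iff.1 h.1
  · rw [mem_support_iff, coeff_monomial_mul', ite_ne_right_iff, one_mul, ← mem_support_iff] at hu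
    obtain ⟨v, rfl⟩ := exists_add_of_le hu.1
    rw [add_tsub_cancel_left] at hu
    rw [add_comm s, add_comm s]
    exact (h.2 v hu.2).imp (congrArg (· + s)) (hr.add v m s)

theorem mem_initialIdealO_iff (hr : IsWeightOrder r) {I : Ideal (PS K n)} {x : PS K n} :
    x ∈ initialIdealO K n r I ↔ ∀ m ∈ x.support, ∃ f ∈ I, IsLeadingExp r f m := by
  have hspan : initialIdealO K n r I =
      Ideal.span ((fun m => monomial m 1) '' {m | ∃ f ∈ I, IsLeadingExp r f m}) := by
    refine congrArg Ideal.span (Set.ext fun g => ⟨?_, ?_⟩)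
    · rintro ⟨f, hf, m, hm, hmax, rfl⟩
      exact ⟨m, ⟨f, hf, hm, hmax⟩, rfl⟩
    · rintro ⟨m, ⟨f, hf, hm, hmax⟩, rfl⟩
      exact ⟨f, hf, m, hm, hmax, rfl⟩
  rw [hspan, mem_ideal_span_monomial_image]
  refine forall₂_congr fun m _ => ⟨?_, fun h => ⟨m, h, le_rfl⟩⟩
  rintro ⟨u, ⟨f, hf, hu⟩, hum⟩
  refine ⟨monomial (m - u) 1 * f, I.mul_mem_left _ hf, ?_⟩
  simpa only [tsub_add_cancel_of_le hum] using hu.monomial_mul hr (m - u)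

theorem isHomog_initialIdealO (hr : IsWeightOrder r) (I : Ideal (PS K n)) :
    IsHomog K n (initialIdealO K n r I) := by
  intro x hx d
  rw [mem_initialIdealO_iff hr] at hx ⊢
  rw [support_homogeneousComponent]
  exact fun m hm => hx m (Finset.mem_filter.1 hm).1

theorem IsLeadingExp.exists_mem_gradedPart {I : Ideal (PS K n)} (hI : IsHomog K n I) {f : PS K n}
    (hf : f ∈ I) {m : Fin n →₀ ℕ} (h : IsLeadingExp r f m) :
    ∃ f' ∈ gradedPart I m.degree, IsLeadingExp r f' m := by
  refine ⟨homogeneousComponent m.degree f, ⟨?_, hI f hf _⟩, ?_⟩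
  · rw [SetLike.mem_coe, polyGrade_natCast]
    exact homogeneousComponent_isHomogeneous _ f
  · rw [IsLeadingExp, support_homogeneousComponent]
    exact ⟨Finset.mem_filter.2 ⟨h.1, rfl⟩, fun u hu => h.2 u (Finset.mem_filter.1 hu).1⟩

/-- The diagonal matrix of the substitution `x_i ↦ t^{-w_i} x_i`, which for `t ≠ 0` belongs to the
one-parameter subgroup of weight `-w`. -/
def weightScaling (w : Fin n → ℕ) (t : K) : Matrix (Fin n) (Fin n) K :=
  Matrix.diagonal fun i => (t ^ w i)⁻¹

theorem exists_coordChange_eq_weightScaling (w : Fin n → ℕ) {t : K} (ht : t ≠ 0) :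
    ∃ g : GL (Fin n) K, coordChange K n g = linearSubst (weightScaling w t) := by
  have hdet : (weightScaling w t).det ≠ 0 := by
    rw [weightScaling, Matrix.det_diagonal]
    exact Finset.prod_ne_zero_iff.2 fun i _ => inv_ne_zero (pow_ne_zero _ ht)
  exact ⟨Matrix.GeneralLinearGroup.mkOfDetNeZero _ hdet, rfl⟩

theorem linearSubst_weightScaling_monomial (w : Fin n → ℕ) (t : K) (m : Fin n →₀ ℕ) (c : K) :
    linearSubst (weightScaling w t) (monomial m c) =
      (t ^ Finsupp.weight w m)⁻¹ • monomial m c := by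
  have hX (i : Fin n) :
      ∑ j, weightScaling w t j i • (X j : PS K n) = C (t ^ w i)⁻¹ * X i := by
    simp only [weightScaling, Matrix.diagonal_apply, ite_smul, zero_smul, Finset.sum_ite_eq',
      Finset.mem_univ, if_true, smul_eq_C_mul]
  have hprod : ∏ i, (C (t ^ w i)⁻¹ : PS K n) ^ m i = C (t ^ Finsupp.weight w m)⁻¹ := by
    simp only [Finsupp.weight_eq_sum, ← Finset.prod_pow_eq_pow_sum, ← Finset.prod_inv_distrib,
      map_prod, ← map_pow, inv_pow, ← pow_mul, smul_eq_mul, mul_comm]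
  rw [linearSubst, aeval_monomial, monomial_eq, Finsupp.prod_fintype _ _ fun _ => pow_zero _,
    Finsupp.prod_fintype _ _ fun _ => pow_zero _]
  simp only [hX, mul_pow, Finset.prod_mul_distrib, hprod]
  rw [algebraMap_eq, smul_eq_C_mul, mul_left_comm]

/-- Rescaled by `t ^ weight w m`, the torus translate of `f` becomes polynomial in `t`, with value
at `t = 0` the leading term of `f`. -/
theorem IsLeadingExp.monomial_mem_limitSubmodule {I : Ideal (PS K n)} {p : ℤ} {f : PS K n}
    (hf : f ∈ gradedPart I p) {m : Fin n →₀ ℕ} (h : IsLeadingExp r f m) {w : Fin n → ℕ}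
    (hw : ∀ u ∈ f.support, r u m → Finsupp.weight w u < Finsupp.weight w m) :
    monomial m (coeff m f) ∈ limitSubmodule {a : Unit → K | a () ≠ 0} 0
      fun a => gradedPart (I.map (linearSubst (weightScaling w (a ())))) p := by
  have hlt (u : Fin n →₀ ℕ) (hu : u ∈ f.support) (hne : u ≠ m) :
      Finsupp.weight w u < Finsupp.weight w m :=
    hw u hu ((h.2 u hu).resolve_left hne)
  rw [mem_limitSubmodule_iff]
  refine ⟨fun a => ∑ u ∈ f.support,
    a () ^ (Finsupp.weight w m - Finsupp.weight w u) • monomial u (coeff u f), ?_, ?_, ?_⟩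
  · have hsum := sum_mem fun u (_ : u ∈ f.support) =>
      eval_smul_mem_polyFamily (X () ^ (Finsupp.weight w m - Finsupp.weight w u) :
        MvPolynomial Unit K) (monomial u (coeff u f) : PS K n)
    rw [Finset.sum_fn] at hsum
    simp only [map_pow, eval_X] at hsum
    exact hsum
  · intro a ha
    have hscale : ∑ u ∈ f.support,
        a () ^ (Finsupp.weight w m - Finsupp.weight w u) • monomial u (coeff u f) =
        a () ^ Finsupp.weight w m • linearSubst (weightScaling w (a ())) f := by
      conv_rhs => rw [as_sum f, map_sum, Finset.smul_sum]
      refine Finset.sum_congr rfl fun u hu => ?_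
      have hle : Finsupp.weight w u ≤ Finsupp.weight w m := by
        rcases eq_or_ne u m with rfl | hne
        exacts [le_rfl, (hlt u hu hne).le]
      rw [linearSubst_weightScaling_monomial, smul_smul, pow_sub₀ _ ha hle]
    beta_reduce
    rw [hscale]
    exact Submodule.smul_mem _ _ (linearSubst_mem_gradedPart _ hf)
  · refine (Finset.sum_eq_single_of_mem m h.1 fun u hu hne => ?_).trans ?_
    · rw [Pi.zero_apply, zero_pow (Nat.sub_ne_zero_of_lt (hlt u hu hne)), zero_smul]
    · rw [Nat.sub_self, pow_zero, one_smul]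

theorem gradedPart_initialIdealO_le_limitSubmodule (hr : IsWeightOrder r) {I : Ideal (PS K n)}
    (hI : IsHomog K n I) {D : ℕ} {w : Fin n → ℕ}
    (hw : ∀ u v, u.degree ≤ D → v.degree ≤ D → r u v →
      Finsupp.weight w u < Finsupp.weight w v) {p : ℤ} (hp : p ≤ D) :
    gradedPart (initialIdealO K n r I) p ≤ limitSubmodule {a : Unit → K | a () ≠ 0} 0
      fun a => gradedPart (I.map (linearSubst (weightScaling w (a ())))) p := by
  rintro x ⟨hxp, hx⟩
  rw [as_sum x]
  refine Submodule.sum_mem _ fun m hm => ?_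
  obtain ⟨g, hg, hgm⟩ := (mem_initialIdealO_iff hr).1 hx m hm
  obtain ⟨f, hf, hfm⟩ := hgm.exists_mem_gradedPart hI hg
  have hm_degree := mem_polyGrade_iff.1 hxp m hm
  rw [hm_degree] at hf
  have hdegree (u : Fin n →₀ ℕ) (hu : u ∈ f.support) : u.degree ≤ D :=
    Int.ofNat_le.1 ((mem_polyGrade_iff.1 hf.1 u hu).trans_le hp)
  have hlim := hfm.monomial_mem_limitSubmodule hf
    fun u hu hum => hw u m (hdegree u hu) (hdegree m hfm.1) hum
  have hc : monomial m (coeff m x) =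
      (coeff m x * (coeff m f)⁻¹) • monomial m (coeff m f) := by
    rw [smul_monomial, smul_eq_mul, inv_mul_cancel_right₀ (mem_support_iff.1 hfm.1)]
  rw [hc]
  exact Submodule.smul_mem _ _ hlim

theorem exists_linearMap_coeff_eq_ite (P : (Fin n →₀ ℕ) → Prop) [DecidablePred P] :
    ∃ π : PS K n →ₗ[K] PS K n, ∀ x m, coeff m (π x) = if P m then coeff m x else 0 := by
  let π := (basisMonomials (Fin n) K).constr K fun m => if P m then monomial m (1 : K) else 0
  refine ⟨π, fun x m => ?_⟩
  have hext : lcoeff K m ∘ₗ π = (if P m then 1 else 0 : K) • lcoeff K m := by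
    refine (basisMonomials (Fin n) K).ext fun u => ?_
    rw [LinearMap.comp_apply, Module.Basis.constr_basis, LinearMap.smul_apply, coe_basisMonomials]
    rcases eq_or_ne u m with rfl | hne
    · by_cases hu : P u <;> simp [hu]
    · by_cases hu : P u <;> simp [hu, coeff_monomial, hne]
  have hx := LinearMap.congr_fun hext x
  rwa [LinearMap.smul_apply, ite_smul, one_smul, zero_smul] at hx

theorem finrank_gradedPart_le_finrank_gradedPart_initialIdealO (hr : IsWeightOrder r)
    (I : Ideal (PS K n)) (p : ℤ) :
    Module.finrank K (gradedPart I p) ≤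
      Module.finrank K (gradedPart (initialIdealO K n r I) p) := by
  classical
  obtain ⟨π, hπ⟩ := exists_linearMap_coeff_eq_ite (K := K)
    fun m : Fin n →₀ ℕ => ∃ f ∈ I, IsLeadingExp r f m
  have hmem (x : PS K n) (m : Fin n →₀ ℕ) :
      m ∈ (π x).support ↔ (∃ f ∈ I, IsLeadingExp r f m) ∧ m ∈ x.support := by
    rw [mem_support_iff, hπ, ite_ne_right_iff, mem_support_iff]
  have hmaps (x : PS K n) (hx : x ∈ gradedPart I p) :
      π x ∈ gradedPart (initialIdealO K n r I) p :=
    ⟨mem_polyGrade_iff.2 fun m hm => mem_polyGrade_iff.1 hx.1 m ((hmem x m).1 hm).2,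
      (mem_initialIdealO_iff hr).2 fun m hm => ((hmem x m).1 hm).1⟩
  refine LinearMap.finrank_le_finrank_of_injective (f := π.restrict hmaps) ?_
  rw [← LinearMap.ker_eq_bot, LinearMap.ker_eq_bot']
  rintro ⟨x, hx⟩ hπx
  by_contra hne
  obtain ⟨m, hm⟩ := hr.exists_isLeadingExp (f := x) fun h => hne (Subtype.ext h)
  have hm_mem : m ∈ (π x).support := (hmem x m).2 ⟨⟨x, hx.2, hm⟩, hm.1⟩
  rw [show π x = 0 from congrArg Subtype.val hπx, support_zero] at hm_mem
  exact Finset.notMem_empty m hm_mem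

theorem finrank_gradedPart_initialIdealO [Infinite K] (hr : IsWeightOrder r)
    {I : Ideal (PS K n)} (hI : IsHomog K n I) (p : ℤ) :
    Module.finrank K (gradedPart (initialIdealO K n r I) p) =
      Module.finrank K (gradedPart I p) := by
  refine le_antisymm ?_ (finrank_gradedPart_le_finrank_gradedPart_initialIdealO hr I p)
  obtain ⟨w, hw⟩ := hr.weight p.toNat
  obtain ⟨a, ha, hle⟩ := eval_ne_zero_of_eventually_zariskiNhds
    (eventually_finrank_le_of_le_limitSubmodule (fun _ _ => finiteDimensional_gradedPart _ _)
      (gradedPart_initialIdealO_le_limitSubmodule hr hI hw p.self_le_toNat)) (X_ne_zero ())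
  rw [eval_X] at ha
  obtain ⟨g, hg⟩ := exists_coordChange_eq_weightScaling w ha
  rw [← finrank_gradedPart_map_coordChange g I, hg]
  exact hle ha

theorem exists_finrank_boundaryStrand_initialIdealO_le [Infinite K]
    {r' : (Fin n →₀ ℕ) → (Fin n →₀ ℕ) → Prop} (hr : IsWeightOrder r) (hr' : IsWeightOrder r')
    {I J : Ideal (PS K n)} (hI : IsHomog K n I) (hJ : IsHomog K n J) (j : ℤ) (N : ℕ) :
    ∃ g g' : GL (Fin n) K, ∀ i < N,
      Module.finrank K (boundaryStrand (initialIdealO K n r I) (initialIdealO K n r' J) i j) ≤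
        Module.finrank K
          (boundaryStrand (I.map (coordChange K n g)) (J.map (coordChange K n g')) i j) := by
  obtain ⟨w, hw⟩ := hr.weight j.toNat
  obtain ⟨w', hw'⟩ := hr'.weight j.toNat
  obtain ⟨a, ha, hle⟩ := eval_ne_zero_of_eventually_zariskiNhds
    (eventually_finrank_boundaryStrand_le
      (fun p hp =>
        gradedPart_initialIdealO_le_limitSubmodule hr hI hw (hp.trans j.self_le_toNat))
      (fun p hp =>
        gradedPart_initialIdealO_le_limitSubmodule hr' hJ hw' (hp.trans j.self_le_toNat)) N)
    (X_ne_zero ())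
  rw [eval_X] at ha
  obtain ⟨g, hg⟩ := exists_coordChange_eq_weightScaling w ha
  obtain ⟨g', hg'⟩ := exists_coordChange_eq_weightScaling w' ha
  refine ⟨g, g', fun i hi => ?_⟩
  rw [hg, hg']
  exact hle i hi ha

end InitialIdeals

/-! ### Generic initial ideals -/

section Generic

variable {K n}

theorem generally.exists [Infinite K] {P : GL (Fin n) K → Prop} (h : generally K n P) :
    ∃ g, P g := by
  obtain ⟨F, hF, hP⟩ := h
  obtain ⟨a, ha⟩ := not_forall.1
    (mt MvPolynomial.funext (mul_ne_zero hF (Matrix.det_mvPolynomialX_ne_zero (Fin n) K)))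
  rw [map_zero, map_mul, mul_eq_zero, not_or, Matrix.eval_det_mvPolynomialX] at ha
  exact ⟨Matrix.GeneralLinearGroup.mkOfDetNeZero _ ha.2, hP _ ha.1⟩

theorem tor_dim_general_le_gins_ideal_general [Infinite K]
    {r r' : (Fin n →₀ ℕ) → (Fin n →₀ ℕ) → Prop} (hr : IsWeightOrder r) (hr' : IsWeightOrder r')
    (j : ℤ) {I J : Ideal (PS K n)} (hI : IsHomog K n I) (hJ : IsHomog K n J)
    (h k : GL (Fin n) K) :
    generally K n fun g => ∀ i,
      torIQ K n I (J.map (coordChange K n g)) i j ≤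
        torIQ K n (initialIdealO K n r (I.map (coordChange K n h)))
          (initialIdealO K n r' (J.map (coordChange K n k))) i j := by
  have hIh := hI.map_coordChange h
  have hJk := hJ.map_coordChange k
  obtain ⟨s, t, hst⟩ := exists_finrank_boundaryStrand_initialIdealO_le hr hr' hIh hJk j
    (j.toNat + 1)
  obtain ⟨F, hF₀, hF⟩ := generally_finrank_boundaryStrand_le I J ((s * h)⁻¹ * (t * k)) j
    (j.toNat + 1)
  refine ⟨F, hF₀, fun g hg => torIQ_le_torIQ_of_finrank_boundaryStrand_le hI
    (hJ.map_coordChange g) (isHomog_initialIdealO hr _) (isHomog_initialIdealO hr' _)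
    (fun p => ?_) (fun p => ?_) fun i hi => ?_⟩
  · rw [finrank_gradedPart_initialIdealO hr hIh, finrank_gradedPart_map_coordChange]
  · rw [finrank_gradedPart_initialIdealO hr' hJk, finrank_gradedPart_map_coordChange,
      finrank_gradedPart_map_coordChange]
  · have htranslate := finrank_boundaryStrand_map_coordChange_le (s * h) I
      (J.map (coordChange K n ((s * h)⁻¹ * (t * k)))) i j
    rw [map_coordChange_map, mul_inv_cancel_left, ← map_coordChange_map, ← map_coordChange_map]
      at htranslate
    exact (hst i hi).trans (htranslate.trans (hF g hg i hi))

end Generic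

/-- **Theorem 2.8(ii)** (Caviglia–Murai): fix `j` and homogeneous ideals `I, J ⊆ S`.  For a
general change of coordinates `g ∈ GL_n(K)`,
`dim_K Tor_i(I, S/g(J))_j ≤ dim_K Tor_i(Gin_lex(I), S/Gin_oplex(J))_j` for all `i`. -/
theorem tor_dim_general_le_gins_ideal [Infinite K] (j : ℤ)
    (I J : Ideal (PS K n)) (hI : IsHomog K n I) (hJ : IsHomog K n J)
    (GinI : Ideal (PS K n))
    (hGinI : generally K n (fun g =>
      initialIdealO K n (lexLt n) (Ideal.map (coordChange K n g) I) = GinI))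
    (GinJ : Ideal (PS K n))
    (hGinJ : generally K n (fun g =>
      initialIdealO K n (oplexLt n) (Ideal.map (coordChange K n g) J) = GinJ))
 :
    generally K n (fun g => ∀ i : ℕ,
      torIQ K n I (Ideal.map (coordChange K n g) J) i j ≤ torIQ K n GinI GinJ i j) := by
  obtain ⟨h, rfl⟩ := hGinI.exists
  obtain ⟨k, rfl⟩ := hGinJ.exists
  exact tor_dim_general_le_gins_ideal_general isWeightOrder_lexLt isWeightOrder_oplexLt j hI hJ h k

end
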